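/- arXiv:1407.5083 — 8 statements merged into one kernel-verified Lean document; each statement's English description precedes it below -/
import Mathlib

section
/- There is an n₀ such that every fair complete bipartite graph on more than n₀ vertices whose edges are coloured red and blue can be partitioned into 12 vertex-disjoint monochromatic cycles; that is, its vertex set is the disjoint union of the vertex sets of at most 12 monochromatic cycles. (A complete bipartite graph is fair exactly when it is balanced, i.e. its two classes have equal size.) -/
open SimpleGraph Set

/- Convention: colour `true` is red, colour `false` is blue. -/

/-- The subgraph of `G` consisting of the edges of colour `b`. -/
def monoSubgraph {V : Type*} (G : SimpleGraph V) (c : Sym2 V → Bool) (b : Bool) :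
    SimpleGraph V :=
  SimpleGraph.fromEdgeSet {e | e ∈ G.edgeSet ∧ c e = b}

/-- `S` is the vertex set of a (possibly empty, possibly trivial) path of `G`
all of whose edges have colour `b`. -/
def IsMonoPathSet {V : Type*} (G : SimpleGraph V) (c : Sym2 V → Bool) (b : Bool)
    (S : Set V) : Prop :=
  S = ∅ ∨ ∃ (u v : V) (p : G.Walk u v), p.IsPath ∧ (∀ e ∈ p.edges, c e = b) ∧
    S = {x | x ∈ p.support}

/-- `S` is the vertex set of a (possibly degenerate: empty, single vertex or single edge)
cycle of `G` all of whose edges have colour `b`. -/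
def IsMonoCycleSet {V : Type*} (G : SimpleGraph V) (c : Sym2 V → Bool) (b : Bool)
    (S : Set V) : Prop :=
  S = ∅ ∨ (∃ v, S = {v}) ∨ (∃ u v, G.Adj u v ∧ c s(u, v) = b ∧ S = {u, v}) ∨
    ∃ (v : V) (p : G.Walk v v), p.IsCycle ∧ (∀ e ∈ p.edges, c e = b) ∧
      S = {x | x ∈ p.support}

/-- `M` is a matching of `G` in colour `b` which is connected, i.e. all its edges lie in one
connected component of the subgraph formed by the edges of colour `b`. -/
def IsConnMatching {V : Type*} (G : SimpleGraph V) (c : Sym2 V → Bool) (b : Bool)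
    (M : Set (Sym2 V)) : Prop :=
  (∀ e ∈ M, e ∈ G.edgeSet ∧ c e = b) ∧
  (∀ e ∈ M, ∀ f ∈ M, e ≠ f → ∀ x, x ∈ e → x ∉ f) ∧
  (∀ e ∈ M, ∀ f ∈ M, ∀ x, x ∈ e → ∀ y, y ∈ f → (monoSubgraph G c b).Reachable x y)

/-- The set of vertices covered by a set of edges. -/
def matchSupport {V : Type*} (M : Set (Sym2 V)) : Set V := {x | ∃ e ∈ M, x ∈ e}

/-- The colouring `c` of the (bipartite, with classes `U` and `W`) graph `G` is a split
colouring: `U = A ∪ B`, `W = C ∪ D`, the edges between `A,C` and between `B,D` are blue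
(`false`), and the edges between `A,D` and between `B,C` are red (`true`). -/
def IsSplitColouring {V : Type*} (G : SimpleGraph V) (c : Sym2 V → Bool)
    (U W : Set V) : Prop :=
  ∃ A B C D : Set V,
    A ∪ B = U ∧ Disjoint A B ∧ C ∪ D = W ∧ Disjoint C D ∧
    (∀ u v, G.Adj u v →
      (((u ∈ A ∧ v ∈ C) ∨ (u ∈ C ∧ v ∈ A) ∨ (u ∈ B ∧ v ∈ D) ∨ (u ∈ D ∧ v ∈ B)) →
        c s(u, v) = false)) ∧
    (∀ u v, G.Adj u v →
      (((u ∈ A ∧ v ∈ D) ∨ (u ∈ D ∧ v ∈ A) ∨ (u ∈ B ∧ v ∈ C) ∨ (u ∈ C ∧ v ∈ B)) →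
        c s(u, v) = true))

/-- The colouring `c` of `G` is `δ`-close to a split colouring: one can delete at most
`δ|E(G)|` edges so that the remaining graph is bipartite and the colouring on it is a
split colouring. -/
def CloseToSplit {V : Type*} (G : SimpleGraph V) (c : Sym2 V → Bool) (δ : ℝ) : Prop :=
  ∃ F : Set (Sym2 V), F ⊆ G.edgeSet ∧ (F.ncard : ℝ) ≤ δ * (G.edgeSet.ncard : ℝ) ∧
    ∃ U W : Set V, U ∪ W = Set.univ ∧ Disjoint U W ∧
      (∀ u v, (G.deleteEdges F).Adj u v → ((u ∈ U ∧ v ∈ W) ∨ (u ∈ W ∧ v ∈ U))) ∧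
      IsSplitColouring (G.deleteEdges F) c U W


namespace CycPart

variable {V : Type}

/-- `x` and `y` lie in different classes and the edge between them has colour `b`. -/
def Rel (f : V → Bool) (c : Sym2 V → Bool) (b : Bool) (x y : V) : Prop :=
  f x ≠ f y ∧ c s(x, y) = b

lemma Rel.symm {f : V → Bool} {c : Sym2 V → Bool} {b : Bool} {x y : V}
    (h : Rel f c b x y) : Rel f c b y x :=
  ⟨h.1.symm, by rw [Sym2.eq_swap]; exact h.2⟩

/-- A chain is the support of a monochromatic walk. -/
lemma exists_walk (f : V → Bool) (G : SimpleGraph V) (c : Sym2 V → Bool)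
    (hG : ∀ x y, G.Adj x y ↔ f x ≠ f y) (b : Bool) (l : List V) :
    ∀ a : V, (a :: l).IsChain (Rel f c b) →
      ∃ (z : V) (p : G.Walk a z), p.support = a :: l ∧ (∀ e ∈ p.edges, c e = b) ∧
        z ∈ (a :: l).getLast? := by
  induction l with
  | nil =>
    intro a _
    exact ⟨a, SimpleGraph.Walk.nil, by simp, by simp, by simp⟩
  | cons d l ih =>
    intro a h
    rw [List.isChain_cons_cons] at h
    obtain ⟨z, p, h1, h2, h3⟩ := ih d h.2
    refine ⟨z, SimpleGraph.Walk.cons ((hG a d).2 h.1.1) p, by simp [h1], ?_, ?_⟩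
    · intro e he
      rw [SimpleGraph.Walk.edges_cons, List.mem_cons] at he
      rcases he with rfl | he
      · exact h.1.2
      · exact h2 e he
    · simpa [List.getLast?_cons_cons] using h3

/-- A closed chain is the vertex set of a monochromatic cycle. -/
lemma cycle_of_list (f : V → Bool) (G : SimpleGraph V) (c : Sym2 V → Bool)
    (hG : ∀ x y, G.Adj x y ↔ f x ≠ f y) (b : Bool) (l : List V) (hn : l.Nodup)
    (hc : l.IsChain (Rel f c b))
    (hcl : 2 ≤ l.length → ∀ a ∈ l.head?, ∀ z ∈ l.getLast?, Rel f c b z a) :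
    IsMonoCycleSet G c b {x | x ∈ l} := by
  match l, hn, hc, hcl with
  | [], _, _, _ => left; ext x; simp
  | [a], _, _, _ => right; left; exact ⟨a, by ext x; simp⟩
  | [a, d], _, hc, _ =>
    right; right; left
    have h := (List.isChain_cons_cons.1 hc).1
    exact ⟨a, d, (hG a d).2 h.1, h.2, by ext x; simp⟩
  | a :: d :: e :: l, hn, hc, hcl =>
    right; right; right
    rw [List.isChain_cons_cons] at hc
    obtain ⟨z, p, h1, h2, h3⟩ := exists_walk f G c hG b (e :: l) d hc.2
    have hz : Rel f c b z a := hcl (by simp) a (by simp) z (by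
      simpa [List.getLast?_cons_cons] using h3)
    have hp : p.IsPath := by
      rw [SimpleGraph.Walk.isPath_def, h1]
      exact (List.nodup_cons.1 hn).2
    have ha : a ∉ p.support := by
      rw [h1]; exact (List.nodup_cons.1 hn).1
    have had : G.Adj a d := (hG a d).2 hc.1.1
    refine ⟨z, SimpleGraph.Walk.cons ((hG z a).2 hz.1) (SimpleGraph.Walk.cons had p), ?_, ?_, ?_⟩
    · rw [SimpleGraph.Walk.cons_isCycle_iff, SimpleGraph.Walk.cons_isPath_iff]
      refine ⟨⟨hp, ha⟩, ?_⟩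
      rw [SimpleGraph.Walk.edges_cons, List.mem_cons]
      rintro (h | h)
      · have hzd : z = d := by
          rw [Sym2.eq_swap, Sym2.congr_right] at h
          exact h
        subst hzd
        have := SimpleGraph.Walk.nil_iff_support_eq.1 (SimpleGraph.Walk.isPath_iff_nil.1 hp)
        rw [this] at h1
        simp at h1
      · exact ha (SimpleGraph.Walk.snd_mem_support_of_mem_edges p h)
    · intro e' he
      simp only [SimpleGraph.Walk.edges_cons, List.mem_cons] at he
      rcases he with rfl | rfl | he
      · exact hz.2
      · exact hc.1.2
      · exact h2 e' he
    · have hzm : z ∈ d :: e :: l := by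
        rw [← h1]; simp
      ext x
      simp only [Set.mem_ofPred_eq, SimpleGraph.Walk.support_cons, h1, List.mem_cons] at hzm ⊢
      constructor
      · intro h; right; exact h
      · rintro (rfl | h)
        · right; exact hzm
        · exact h

/-- A monochromatic balanced complete bipartite graph has a Hamiltonian alternating path. -/
lemma interleave [DecidableEq V] (r : V → V → Prop) (hr : ∀ x y, r x y → r y x) (k : ℕ) :
    ∀ X Y : Finset V, X.card = k → Y.card = k → Disjoint X Y →
      (∀ x ∈ X, ∀ y ∈ Y, r x y) →
      ∃ l : List V, l.Nodup ∧ l.IsChain r ∧ (∀ x, x ∈ l ↔ x ∈ X ∨ x ∈ Y) ∧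
        (∀ a ∈ l.head?, a ∈ X) ∧ (∀ z ∈ l.getLast?, z ∈ Y) := by
  induction k with
  | zero =>
    intro X Y hX hY _ _
    rw [Finset.card_eq_zero] at hX hY
    subst hX hY
    exact ⟨[], by simp⟩
  | succ k ih =>
    intro X Y hX hY hd hxy
    obtain ⟨x, hx⟩ := Finset.card_pos.1 (by omega : 0 < X.card)
    obtain ⟨y, hy⟩ := Finset.card_pos.1 (by omega : 0 < Y.card)
    obtain ⟨l, h1, h2, h3, h4, h5⟩ := ih (X.erase x) (Y.erase y)
      (by rw [Finset.card_erase_of_mem hx]; omega) (by rw [Finset.card_erase_of_mem hy]; omega)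
      (hd.mono (Finset.erase_subset _ _) (Finset.erase_subset _ _))
      (fun a ha d hd => hxy a (Finset.mem_of_mem_erase ha) d (Finset.mem_of_mem_erase hd))
    have hd' : ∀ a ∈ X, a ∉ Y := fun a ha => Finset.disjoint_left.1 hd ha
    refine ⟨x :: y :: l, ?_, ?_, ?_, ?_, ?_⟩
    · simp only [List.nodup_cons, List.mem_cons, h3, Finset.mem_erase]
      refine ⟨?_, ?_, h1⟩
      · rintro (h | h | h)
        · exact hd' x hx (h ▸ hy)
        · exact h.1 rfl
        · exact hd' x hx h.2
      · rintro (h | h)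
        · exact hd' y h.2 hy
        · exact h.1 rfl
    · rw [List.isChain_cons_cons, List.isChain_cons]
      refine ⟨hxy x hx y hy, ?_, h2⟩
      intro a ha
      exact hr _ _ (hxy a (Finset.mem_of_mem_erase (h4 a ha)) y hy)
    · intro a
      simp only [List.mem_cons, h3, Finset.mem_erase]
      by_cases hax : a = x
      · subst hax; simp [hx]
      · by_cases hay : a = y
        · subst hay; simp [hy]
        · simp [hax, hay]
    · simp [hx]
    · intro z hz
      rw [List.getLast?_cons_cons] at hz
      cases l with
      | nil => simp at hz; subst hz; exact hy
      | cons e l =>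
        rw [List.getLast?_cons_cons] at hz
        exact Finset.mem_of_mem_erase (h5 z hz)

lemma cycle_of_complete [DecidableEq V] (f : V → Bool) (G : SimpleGraph V) (c : Sym2 V → Bool)
    (hG : ∀ x y, G.Adj x y ↔ f x ≠ f y) (b : Bool) (X Y : Finset V) (hXY : X.card = Y.card)
    (hd : Disjoint X Y) (h : ∀ x ∈ X, ∀ y ∈ Y, Rel f c b x y) :
    IsMonoCycleSet G c b {x | x ∈ X ∪ Y} := by
  obtain ⟨l, h1, h2, h3, h4, h5⟩ := interleave (Rel f c b) (fun _ _ h => h.symm) X.card X Y rfl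
    hXY.symm hd h
  have := cycle_of_list f G c hG b l h1 h2 (fun _ a ha z hz => (h a (h4 a ha) z (h5 z hz)).symm)
  have he : {x | x ∈ l} = {x | x ∈ X ∪ Y} := by ext x; simp [h3]
  rwa [he] at this

/-- The depth first search lemma. -/
lemma dfs [DecidableEq V] (r : V → V → Prop) (S : Finset V) (k : ℕ) :
    k ≤ S.card → ∃ (P : List V) (U D : Finset V), P.Nodup ∧ P.IsChain r ∧
      (∀ x, x ∈ S ↔ x ∈ P ∨ x ∈ U ∨ x ∈ D) ∧ (∀ x ∈ P, x ∉ U ∧ x ∉ D) ∧ (∀ x ∈ U, x ∉ D) ∧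
      U.card + k = S.card + D.card ∧ (∀ u ∈ U, ∀ d ∈ D, ¬ r u d) := by
  induction k with
  | zero =>
    intro _
    exact ⟨[], S, ∅, by simp⟩
  | succ k ih =>
    intro hk
    obtain ⟨P, U, D, h1, h2, h3, h4, h5, h6, h7⟩ := ih (by omega)
    obtain ⟨u0, hu0⟩ := Finset.card_pos.1 (by omega : 0 < U.card)
    have push : ∀ u ∈ U, (∀ a ∈ P.head?, r u a) → ∃ (P : List V) (U D : Finset V),
      P.Nodup ∧ P.IsChain r ∧
      (∀ x, x ∈ S ↔ x ∈ P ∨ x ∈ U ∨ x ∈ D) ∧ (∀ x ∈ P, x ∉ U ∧ x ∉ D) ∧ (∀ x ∈ U, x ∉ D) ∧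
      U.card + (k + 1) = S.card + D.card ∧ (∀ u ∈ U, ∀ d ∈ D, ¬ r u d) := by
      intro u hu hP
      refine ⟨u :: P, U.erase u, D, ?_, ?_, ?_, ?_, ?_, ?_, ?_⟩
      · rw [List.nodup_cons]
        exact ⟨fun h => (h4 u h).1 hu, h1⟩
      · rw [List.isChain_cons]; exact ⟨hP, h2⟩
      · intro x
        rw [h3, List.mem_cons, Finset.mem_erase]
        by_cases hx : x = u
        · subst hx; simp [hu]
        · simp [hx]
      · intro x hx
        rw [List.mem_cons] at hx
        rcases hx with rfl | hx
        · exact ⟨by simp, h5 x hu⟩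
        · exact ⟨fun h => (h4 x hx).1 (Finset.mem_of_mem_erase h), (h4 x hx).2⟩
      · intro x hx; exact h5 x (Finset.mem_of_mem_erase hx)
      · rw [Finset.card_erase_of_mem hu]
        have := Finset.card_pos.2 ⟨u, hu⟩
        omega
      · intro x hx; exact h7 x (Finset.mem_of_mem_erase hx)
    cases P with
    | nil => exact push u0 hu0 (by simp)
    | cons v P =>
      by_cases hv : ∃ u ∈ U, r u v
      · obtain ⟨u, hu, huv⟩ := hv
        exact push u hu (by simpa using huv)
      · push Not at hv
        have hvm := h4 v (by simp)
        rw [List.nodup_cons] at h1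
        refine ⟨P, U, insert v D, h1.2, (List.isChain_cons.1 h2).2, ?_, ?_, ?_, ?_, ?_⟩
        · intro x
          rw [h3, List.mem_cons, Finset.mem_insert]
          tauto
        · intro x hx
          have := h4 x (by simp [hx])
          refine ⟨this.1, ?_⟩
          rw [Finset.mem_insert]
          rintro (rfl | h)
          · exact h1.1 hx
          · exact this.2 h
        · intro x hx
          rw [Finset.mem_insert]
          rintro (rfl | h)
          · exact hvm.1 hx
          · exact h5 x hx h
        · rw [Finset.card_insert_of_notMem hvm.2]; omega
        · intro u hu d hd
          rw [Finset.mem_insert] at hd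
          rcases hd with rfl | hd
          · exact hv u hu
          · exact h7 u hu d hd

/-- Even alternating lists are balanced and have ends in distinct classes. -/
lemma even_alt (f : V → Bool) (m : ℕ) : ∀ l : List V, l.length = 2 * m →
    l.IsChain (fun x y => f x ≠ f y) →
    l.countP (fun x => f x = true) = m ∧ l.countP (fun x => f x = false) = m ∧
      (∀ a ∈ l.head?, ∀ z ∈ l.getLast?, f a ≠ f z) := by
  induction m with
  | zero =>
    intro l hl _
    have : l = [] := List.length_eq_zero_iff.1 (by omega)
    subst this; simp
  | succ m ih =>
    intro l hl hc
    match l, hl, hc with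
    | a :: d :: l, hl, hc =>
      rw [List.isChain_cons_cons, List.isChain_cons] at hc
      obtain ⟨hi1, hi2, hi3⟩ := ih l (by simp at hl; omega) hc.2.2
      refine ⟨?_, ?_, ?_⟩
      · rw [List.countP_cons, List.countP_cons, hi1]
        have := hc.1
        cases ha : f a <;> cases hb : f d <;> simp_all
      · rw [List.countP_cons, List.countP_cons, hi2]
        have := hc.1
        cases ha : f a <;> cases hb : f d <;> simp_all
      · intro a' ha' z hz
        simp at ha'
        subst ha'
        rw [List.getLast?_cons_cons] at hz
        cases l with
        | nil => simp at hz; subst hz; exact hc.1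
        | cons e l =>
          rw [List.getLast?_cons_cons] at hz
          have h1 := hi3 e (by simp) z hz
          have h2 := hc.2.1 e (by simp)
          have h3 := hc.1
          revert h1 h2 h3
          cases f a <;> cases f d <;> cases f e <;> cases f z <;> simp

/-- `S` can be partitioned into at most `k` monochromatic cycles. -/
def Cov (G : SimpleGraph V) (c : Sym2 V → Bool) (k : ℕ) (S : Finset V) : Prop :=
  ∃ L : List (Set V), L.length ≤ k ∧ (∀ s ∈ L, ∃ b, IsMonoCycleSet G c b s) ∧
    L.Pairwise Disjoint ∧ ∀ x, x ∈ S ↔ ∃ s ∈ L, x ∈ s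

lemma Cov.union [DecidableEq V] {G : SimpleGraph V} {c : Sym2 V → Bool} {k m : ℕ}
    {S T : Finset V} (hS : Cov G c k S) (hT : Cov G c m T) (hd : Disjoint S T) :
    Cov G c (k + m) (S ∪ T) := by
  obtain ⟨L, h1, h2, h3, h4⟩ := hS
  obtain ⟨M, g1, g2, g3, g4⟩ := hT
  refine ⟨L ++ M, by simp; omega, ?_, ?_, ?_⟩
  · intro s hs
    rw [List.mem_append] at hs
    rcases hs with hs | hs
    · exact h2 s hs
    · exact g2 s hs
  · rw [List.pairwise_append]
    refine ⟨h3, g3, ?_⟩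
    intro s hs t ht
    rw [Set.disjoint_left]
    intro x hx hx'
    exact Finset.disjoint_left.1 hd ((h4 x).2 ⟨s, hs, hx⟩) ((g4 x).2 ⟨t, ht, hx'⟩)
  · intro x
    rw [Finset.mem_union, h4, g4]
    simp only [List.mem_append]
    constructor
    · rintro (⟨s, h, h'⟩ | ⟨s, h, h'⟩)
      · exact ⟨s, Or.inl h, h'⟩
      · exact ⟨s, Or.inr h, h'⟩
    · rintro ⟨s, h | h, h'⟩
      · exact Or.inl ⟨s, h, h'⟩
      · exact Or.inr ⟨s, h, h'⟩

lemma Cov.mono {G : SimpleGraph V} {c : Sym2 V → Bool} {k m : ℕ}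
    {S : Finset V} (hS : Cov G c k S) (hkm : k ≤ m) : Cov G c m S := by
  obtain ⟨L, h1, h2⟩ := hS
  exact ⟨L, h1.trans hkm, h2⟩

lemma Cov.one {G : SimpleGraph V} {c : Sym2 V → Bool} {b : Bool} {S : Finset V}
    (h : IsMonoCycleSet G c b {x | x ∈ S}) : Cov G c 1 S :=
  ⟨[{x | x ∈ S}], by simp,
    fun s hs => ⟨b, by rw [List.mem_singleton.1 hs]; exact h⟩, by simp, by simp⟩

lemma Cov.singles [DecidableEq V] (G : SimpleGraph V) (c : Sym2 V → Bool) (S : Finset V) :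
    Cov G c S.card S := by
  induction S using Finset.induction_on with
  | empty => exact ⟨[], by simp⟩
  | insert a S ha ih =>
    have h1 : Cov G c 1 {a} := Cov.one (b := true) (Or.inr (Or.inl ⟨a, by ext x; simp⟩))
    have := h1.union ih (by simpa using ha)
    rw [Finset.card_insert_of_notMem ha, Finset.insert_eq]
    exact this.mono (by omega)

/-- A balanced set is the union of a path of colour `b` with both ends in class `i` and at most
three monochromatic cycles. -/
lemma piece [DecidableEq V] (f : V → Bool) (G : SimpleGraph V) (c : Sym2 V → Bool)
    (hG : ∀ x y, G.Adj x y ↔ f x ≠ f y) (b i : Bool) (S : Finset V)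
    (hS : (S.filter (fun x => f x = true)).card = (S.filter (fun x => f x = false)).card) :
    ∃ Q : List V, Q.Nodup ∧ Q.IsChain (Rel f c b) ∧ Q.toFinset ⊆ S ∧
      (∀ a ∈ Q.head?, f a = i) ∧ (∀ z ∈ Q.getLast?, f z = i) ∧ Cov G c 3 (S \ Q.toFinset) := by
  obtain ⟨P, U, D, h1, h2, h3, h4, h5, h6, h7⟩ :=
    dfs (Rel f c b) S S.card le_rfl
  have hUD : U.card = D.card := by omega
  have split : ∀ T : Finset V, T.card =
      (T.filter (fun x => f x = true)).card + (T.filter (fun x => f x = false)).card := by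
    intro T
    rw [← Finset.card_filter_add_card_filter_not (s := T) (fun x => f x = true)]
    simp
  have hdPU : Disjoint P.toFinset U := by
    rw [Finset.disjoint_left]; intro x hx; exact (h4 x (by simpa using hx)).1
  have hdPD : Disjoint P.toFinset D := by
    rw [Finset.disjoint_left]; intro x hx; exact (h4 x (by simpa using hx)).2
  have hdUD : Disjoint U D := by
    rw [Finset.disjoint_left]; exact h5
  have hSe : S = P.toFinset ∪ (U ∪ D) := by
    ext x; simp [h3]
  have cnt : ∀ p : V → Prop, ∀ [DecidablePred p], (S.filter p).card =
      P.countP (fun x => p x) + ((U.filter p).card + (D.filter p).card) := by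
    intro p _
    rw [hSe, Finset.filter_union, Finset.filter_union, Finset.card_union_of_disjoint,
      Finset.card_union_of_disjoint]
    · congr 1
      rw [List.countP_eq_length_filter, ← List.toFinset_card_of_nodup (h1.filter _)]
      congr 1
      ext x; simp
    · exact Finset.disjoint_filter_filter hdUD
    · rw [← Finset.filter_union]
      exact Finset.disjoint_filter_filter (Finset.disjoint_union_right.2 ⟨hdPU, hdPD⟩)
  have c1 := cnt (fun x => f x = true)
  have c2 := cnt (fun x => f x = false)
  have sU := split U
  have sD := split D
  have sS := split S
  have hPl : P.length + (U.card + D.card) = S.card := by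
    rw [hSe, Finset.card_union_of_disjoint (Finset.disjoint_union_right.2 ⟨hdPU, hdPD⟩),
      Finset.card_union_of_disjoint hdUD, List.toFinset_card_of_nodup h1]
  obtain ⟨m, hm⟩ : ∃ m, P.length = 2 * m :=
    ⟨(S.filter (fun x => f x = true)).card - U.card, by omega⟩
  have h2' : P.IsChain (fun x y => f x ≠ f y) := h2.imp (fun _ _ h => h.1)
  obtain ⟨e1, e2, e3⟩ := even_alt f m P hm h2'
  have key : ∀ j j' : Bool, j ≠ j' →
      (U.filter (fun x => f x = j)).card = (D.filter (fun x => f x = j')).card →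
      Cov G c 1 (U.filter (fun x => f x = j) ∪ D.filter (fun x => f x = j')) := by
    intro j j' hj hcard
    refine Cov.one (b := !b) (cycle_of_complete f G c hG (!b) _ _ hcard
      (Finset.disjoint_filter_filter hdUD) ?_)
    intro x hx y hy
    rw [Finset.mem_filter] at hx hy
    have hne : f x ≠ f y := by rw [hx.2, hy.2]; exact hj
    refine ⟨hne, ?_⟩
    have := h7 x hx.1 y hy.1
    have hb : c s(x, y) ≠ b := fun h => this ⟨hne, h⟩
    revert hb
    cases c s(x, y) <;> cases b <;> simp
  have hC : Cov G c 2 (U ∪ D) := by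
    have := (key true false (by simp) (by omega)).union (key false true (by simp) (by omega)) (by
      rw [Finset.disjoint_left]
      intro x hx hx'
      have h5x := h5 x
      clear * - hx hx' h5x
      simp only [Finset.mem_union, Finset.mem_filter] at hx hx'
      cases hf : f x <;> simp [hf] at hx hx' <;> tauto)
    have he : U ∪ D = (U.filter (fun x => f x = true) ∪ D.filter (fun x => f x = false)) ∪
        (U.filter (fun x => f x = false) ∪ D.filter (fun x => f x = true)) := by
      ext x
      simp only [Finset.mem_union, Finset.mem_filter]
      cases f x <;> simp [or_comm]
    rw [he]
    exact this
  -- trimming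
  have trim : ∀ w : V, ∀ Q : List V, (w :: Q).Nodup → (w :: Q).IsChain (Rel f c b) →
      (w :: Q).toFinset = P.toFinset → f w ≠ i → (∀ z ∈ (w :: Q).getLast?, f w ≠ f z) →
      ∃ Q : List V, Q.Nodup ∧ Q.IsChain (Rel f c b) ∧ Q.toFinset ⊆ S ∧
      (∀ a ∈ Q.head?, f a = i) ∧ (∀ z ∈ Q.getLast?, f z = i) ∧
      Cov G c 3 (S \ Q.toFinset) := by
    intro w Q q1 q2 q3 q4 q5
    rw [List.isChain_cons] at q2
    rw [List.nodup_cons] at q1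
    refine ⟨Q, q1.2, q2.2, ?_, ?_, ?_, ?_⟩
    · intro x hx
      rw [hSe, ← q3]; simp at hx ⊢; simp [hx]
    · intro a ha
      have := (q2.1 a ha).1
      revert this q4
      cases f w <;> cases f a <;> cases i <;> simp
    · intro z hz
      have := q5 z (by
        cases Q with
        | nil => simp at hz
        | cons a Q => rwa [List.getLast?_cons_cons])
      revert this q4
      cases f w <;> cases f z <;> cases i <;> simp
    · have hw : w ∈ P.toFinset := by rw [← q3]; simp
      have hd : Disjoint (U ∪ D) {w} := by
        rw [Finset.disjoint_singleton_right, Finset.mem_union]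
        have := h4 w (by simpa using hw)
        tauto
      have := hC.union (Cov.singles G c {w}) hd
      rw [Finset.card_singleton] at this
      convert this using 1
      ext x
      have hq : x ∈ P ↔ x = w ∨ x ∈ Q := by
        rw [← List.mem_toFinset, ← q3]; simp
      have h4x := h4 x
      simp only [Finset.mem_sdiff, h3, Finset.mem_union, List.mem_toFinset,
        Finset.mem_singleton]
      have hwQ := q1.1
      constructor
      · tauto
      · rintro (h | rfl)
        · tauto
        · tauto
  cases hP : P with
  | nil =>
    refine ⟨[], by simp, by simp, by simp, by simp, by simp, ?_⟩
    have : S \ ([] : List V).toFinset = U ∪ D := by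
      rw [hSe, hP]; simp
    rw [this]
    exact hC.mono (by norm_num)
  | cons w Q =>
    by_cases hw : f w = i
    · -- reverse
      obtain ⟨z, hz⟩ : ∃ z, z ∈ P.getLast? := by
        rw [hP]; exact ⟨_, List.getLast?_eq_getLast_of_ne_nil (by simp)⟩
      have hzw := e3 w (by rw [hP]; simp) z hz
      have hrev : P.reverse.head? = some z := by
        rw [List.head?_reverse]; exact hz
      cases hR : P.reverse with
      | nil => rw [hR] at hrev; simp at hrev
      | cons z' R =>
        have hz' : z' = z := by rw [hR] at hrev; simpa using hrev
        subst hz'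
        refine trim z' R ?_ ?_ ?_ ?_ ?_
        · rw [← hR]; exact List.nodup_reverse.2 h1
        · rw [← hR, List.isChain_reverse]; exact h2.imp (fun _ _ h => h.symm)
        · rw [← hR]; simp
        · rw [← hw]; exact hzw.symm
        · rw [← hR, List.getLast?_reverse, hP]
          intro y hy
          simp at hy
          subst hy
          exact hzw.symm
    · exact trim w Q (hP ▸ h1) (hP ▸ h2) (by rw [hP]) hw
        (fun z hz => e3 w (by rw [hP]; simp) z (by rw [hP]; exact hz))

lemma exists_avoid (H : Finset V) (hH : H.card = 3) (p q : V → Prop) [DecidablePred p]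
    [DecidablePred q] (hp : (H.filter p).card ≤ 1) (hq : (H.filter q).card ≤ 1) :
    ∃ y ∈ H, ¬ p y ∧ ¬ q y := by
  classical
  by_contra hcon
  push Not at hcon
  have : H ⊆ H.filter p ∪ H.filter q := by
    intro x hx
    have := hcon x hx
    simp only [Finset.mem_union, Finset.mem_filter]
    tauto
  have h1 := Finset.card_le_card this
  have h2 := Finset.card_union_le (H.filter p) (H.filter q)
  omega

set_option maxHeartbeats 1000000 in
lemma core [Fintype V] [DecidableEq V] (f : V → Bool) (G : SimpleGraph V) (c : Sym2 V → Bool)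
    (hG : ∀ x y, G.Adj x y ↔ f x ≠ f y) (b : Bool)
    (hbal : (Finset.univ.filter (fun x => f x = true)).card =
      (Finset.univ.filter (fun x => f x = false)).card)
    (H0 H1 R0 R1 : Finset V) (hH0 : H0.card = 3) (hH1 : H1.card = 3)
    (hf0 : ∀ x ∈ H0, f x = false) (hf1 : ∀ x ∈ H1, f x = true)
    (hH : ∀ x ∈ H0, ∀ y ∈ H1, c s(x, y) = b)
    (hR0 : ∀ v, v ∈ R0 ↔ v ∉ H0 ∧ v ∉ H1 ∧ f v = false ∧
      (H1.filter (fun h => c s(v, h) = b)).card ≤ 1)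
    (hR1 : ∀ v, v ∈ R1 ↔ v ∉ H0 ∧ v ∉ H1 ∧ f v = true ∧
      (H0.filter (fun h => c s(v, h) = b)).card ≤ 1)
    (hR : R0.card ≤ R1.card) : Cov G c 12 Finset.univ := by
  obtain ⟨T, hT, hTc⟩ := Finset.exists_subset_card_eq hR
  have hTR : ∀ v ∈ T, v ∈ R1 := fun v hv => hT hv
  obtain ⟨S2, hS2⟩ : ∃ S2, S2 = R0 ∪ T := ⟨_, rfl⟩
  obtain ⟨S1, hS1⟩ : ∃ S1, S1 = Finset.univ \ (H0 ∪ H1 ∪ S2) := ⟨_, rfl⟩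
  have hHd : Disjoint H0 H1 := by
    rw [Finset.disjoint_left]
    intro x hx hx'
    have h1 := hf0 x hx
    have h2 := hf1 x hx'
    rw [h1] at h2; cases h2
  have mS2 : ∀ x, x ∈ S2 ↔ x ∈ R0 ∨ x ∈ T := by intro x; simp [hS2]
  have mS1 : ∀ x, x ∈ S1 ↔ x ∉ H0 ∧ x ∉ H1 ∧ x ∉ S2 := by
    intro x; simp [hS1, not_or]
  have n0 : ∀ x ∈ S2, x ∉ H0 ∧ x ∉ H1 := by
    intro x hx
    rcases (mS2 x).1 hx with h | h
    · exact ⟨((hR0 x).1 h).1, ((hR0 x).1 h).2.1⟩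
    · have := (hR1 x).1 (hTR x h)
      exact ⟨this.1, this.2.1⟩
  have fS2t : S2.filter (fun x => f x = true) = T := by
    ext x
    rw [Finset.mem_filter, mS2]
    have h1 := hR0 x
    have h2 := hR1 x
    have h3 := hTR x
    cases hfx : f x <;> simp [hfx] at h1 h2 ⊢ <;> tauto
  have fS2f : S2.filter (fun x => f x = false) = R0 := by
    ext x
    rw [Finset.mem_filter, mS2]
    have h1 := hR0 x
    have h2 := hR1 x
    have h3 := hTR x
    cases hfx : f x <;> simp [hfx] at h1 h2 ⊢ <;> tauto
  have fut : Finset.univ.filter (fun x => f x = true) =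
      H1 ∪ (T ∪ S1.filter (fun x => f x = true)) := by
    ext x
    have h1 := hf0 x
    have h2 := hf1 x
    have h3 : x ∈ T ↔ x ∈ S2 ∧ f x = true := by rw [← fS2t, Finset.mem_filter]
    have h4 := mS1 x
    simp only [Finset.mem_filter, Finset.mem_univ, true_and, Finset.mem_union, h3, h4]
    cases hfx : f x <;> simp [hfx] at h1 h2 ⊢ <;> tauto
  have fuf : Finset.univ.filter (fun x => f x = false) =
      H0 ∪ (R0 ∪ S1.filter (fun x => f x = false)) := by
    ext x
    have h1 := hf0 x
    have h2 := hf1 x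
    have h3 : x ∈ R0 ↔ x ∈ S2 ∧ f x = false := by rw [← fS2f, Finset.mem_filter]
    have h4 := mS1 x
    simp only [Finset.mem_filter, Finset.mem_univ, true_and, Finset.mem_union, h3, h4]
    cases hfx : f x <;> simp [hfx] at h1 h2 ⊢ <;> tauto
  have bal1 : (S1.filter (fun x => f x = true)).card =
      (S1.filter (fun x => f x = false)).card := by
    rw [fut, fuf, Finset.card_union_of_disjoint, Finset.card_union_of_disjoint,
      Finset.card_union_of_disjoint, Finset.card_union_of_disjoint] at hbal
    · omega
    · rw [Finset.disjoint_left]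
      intro x hx hx'
      exact ((mS1 x).1 (Finset.mem_filter.1 hx').1).2.2 ((mS2 x).2 (Or.inl hx))
    · rw [Finset.disjoint_left]
      intro x hx hx'
      rcases Finset.mem_union.1 hx' with h | h
      · exact (n0 x ((mS2 x).2 (Or.inl h))).1 hx
      · exact ((mS1 x).1 (Finset.mem_filter.1 h).1).1 hx
    · rw [Finset.disjoint_left]
      intro x hx hx'
      exact ((mS1 x).1 (Finset.mem_filter.1 hx').1).2.2 ((mS2 x).2 (Or.inr hx))
    · rw [Finset.disjoint_left]
      intro x hx hx'
      rcases Finset.mem_union.1 hx' with h | h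
      · exact (n0 x ((mS2 x).2 (Or.inr h))).2 hx
      · exact ((mS1 x).1 (Finset.mem_filter.1 h).1).2.1 hx
  obtain ⟨Q2, q1, q2, q3, q4, q5, q6⟩ := piece f G c hG (!b) true S2 (by rw [fS2t, fS2f, hTc])
  obtain ⟨Q1, p1, p2, p3, p4, p5, p6⟩ := piece f G c hG b false S1 bal1
  have q3' : ∀ x ∈ Q2, x ∈ S2 := fun x hx => q3 (by simpa using hx)
  have p3' : ∀ x ∈ Q1, x ∈ S1 := fun x hx => p3 (by simpa using hx)
  -- the vertex `y` closing the second path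
  obtain ⟨y, hy, hy2⟩ : ∃ y ∈ H0, Cov G c 1 (insert y Q2.toFinset) := by
    cases hQ : Q2 with
    | nil =>
      obtain ⟨y, hy⟩ := Finset.card_pos.1 (by omega : 0 < H0.card)
      exact ⟨y, hy, by simpa using Cov.singles G c {y}⟩
    | cons a Q =>
      obtain ⟨z, hz⟩ : ∃ z, z ∈ Q2.getLast? := by
        rw [hQ]; exact ⟨_, List.getLast?_eq_getLast_of_ne_nil (by simp)⟩
      have ha : a ∈ Q2.head? := by rw [hQ]; simp
      have endR : ∀ v ∈ Q2, f v = true → (H0.filter (fun h => c s(v, h) = b)).card ≤ 1 := by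
        intro v hv hfv
        have : v ∈ T := by rw [← fS2t, Finset.mem_filter]; exact ⟨q3' v hv, hfv⟩
        exact ((hR1 v).1 (hTR v this)).2.2.2
      obtain ⟨y, hy, hya, hyz⟩ := exists_avoid H0 hH0 (fun h => c s(a, h) = b)
        (fun h => c s(z, h) = b)
        (endR a (List.mem_of_mem_head? ha) (q4 a ha)) (endR z (List.mem_of_mem_getLast? hz) (q5 z hz))
      have ra : Rel f c (!b) a y := by
        refine ⟨by rw [q4 a ha, hf0 y hy]; simp, ?_⟩
        revert hya; cases c s(a, y) <;> cases b <;> simp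
      have rz : Rel f c (!b) z y := by
        refine ⟨by rw [q5 z hz, hf0 y hy]; simp, ?_⟩
        revert hyz; cases c s(z, y) <;> cases b <;> simp
      refine ⟨y, hy, ?_⟩
      have := cycle_of_list f G c hG (!b) (y :: Q2)
        (List.nodup_cons.2 ⟨fun h => (n0 y (q3' y h)).1 hy, q1⟩)
        (List.isChain_cons.2 ⟨fun a' ha' => by
          rw [hQ] at ha'; simp at ha'; subst ha'; exact ra.symm, q2⟩)
        (by
          intro _ y' hy' z' hz'
          simp at hy'; subst hy'
          rw [hQ, List.getLast?_cons_cons, ← hQ] at hz'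
          have : z' = z := Option.some.inj (Option.mem_def.1 hz' ▸ Option.mem_def.1 hz)
          subst this
          exact rz)
      refine Cov.one (b := !b) ?_
      convert this using 1
      ext x; simp [hQ]
  obtain ⟨x, hx, hxy⟩ := Finset.exists_mem_ne (by omega : 1 < H0.card) y
  -- closing the first path
  obtain ⟨K, hKdef⟩ : ∃ K, K = (H0 ∪ H1).erase y := ⟨_, rfl⟩
  have hKc : K.card = 5 := by
    rw [hKdef, Finset.card_erase_of_mem (Finset.mem_union_left _ hy),
      Finset.card_union_of_disjoint hHd]
    omega
  have hK : Cov G c 5 (Q1.toFinset ∪ K) := by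
    cases hQ : Q1 with
    | nil => simpa [hKc] using Cov.singles G c K
    | cons a Q =>
      obtain ⟨z, hz⟩ : ∃ z, z ∈ Q1.getLast? := by
        rw [hQ]; exact ⟨_, List.getLast?_eq_getLast_of_ne_nil (by simp)⟩
      have ha : a ∈ Q1.head? := by rw [hQ]; simp
      have endB : ∀ v ∈ Q1, f v = false →
          1 < (H1.filter (fun h => c s(v, h) = b)).card := by
        intro v hv hfv
        by_contra hcon
        have hv1 := (mS1 v).1 (p3' v hv)
        exact hv1.2.2 ((mS2 v).2 (Or.inl ((hR0 v).2 ⟨hv1.1, hv1.2.1, hfv, by omega⟩)))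
      have hea := endB a (List.mem_of_mem_head? ha) (p4 a ha)
      have hez := endB z (List.mem_of_mem_getLast? hz) (p5 z hz)
      obtain ⟨h, hh⟩ := Finset.card_pos.1 (by omega : 0 < (H1.filter (fun h => c s(a, h) = b)).card)
      obtain ⟨h', hh', hne⟩ := Finset.exists_mem_ne hez h
      rw [Finset.mem_filter] at hh hh'
      have ra : Rel f c b a h := ⟨by rw [p4 a ha, hf1 h hh.1]; simp, hh.2⟩
      have rz : Rel f c b z h' := ⟨by rw [p5 z hz, hf1 h' hh'.1]; simp, hh'.2⟩
      have rx : Rel f c b x h := ⟨by rw [hf0 x hx, hf1 h hh.1]; simp, hH x hx h hh.1⟩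
      have rx' : Rel f c b x h' := ⟨by rw [hf0 x hx, hf1 h' hh'.1]; simp, hH x hx h' hh'.1⟩
      have nx : x ∉ Q1 := fun hm => ((mS1 x).1 (p3' x hm)).1 hx
      have nh : h ∉ Q1 := fun hm => ((mS1 h).1 (p3' h hm)).2.1 hh.1
      have nh' : h' ∉ Q1 := fun hm => ((mS1 h').1 (p3' h' hm)).2.1 hh'.1
      have hd' := fun v (hv : v ∈ H0) => Finset.disjoint_left.1 hHd hv
      have nxh : x ≠ h := fun e => hd' x hx (e ▸ hh.1)
      have nxh' : x ≠ h' := fun e => hd' x hx (e ▸ hh'.1)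
      have nyh : y ≠ h := fun e => hd' y hy (e ▸ hh.1)
      have nyh' : y ≠ h' := fun e => hd' y hy (e ▸ hh'.1)
      have cyc := cycle_of_list f G c hG b (x :: h :: (Q1 ++ [h']))
        (by
          simp only [List.nodup_cons, List.mem_cons, List.mem_append, List.nodup_append,
            List.not_mem_nil, or_false, not_or]
          refine ⟨⟨nxh, nx, nxh'⟩, ⟨nh, fun e => hne e.symm⟩, p1, by simp, ?_⟩
          intro u hu w hw
          rw [hw]
          rintro rfl
          exact nh' hu)
        (by
          rw [List.isChain_cons_cons, List.isChain_cons, List.isChain_append]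
          refine ⟨rx, ?_, p2, by simp, ?_⟩
          · intro a' ha'
            rw [hQ] at ha'; simp at ha'; subst ha'; exact ra.symm
          · intro z' hz' w hw
            have : z' = z := Option.some.inj (Option.mem_def.1 hz' ▸ Option.mem_def.1 hz)
            subst this
            simp at hw; subst hw
            exact rz)
        (by
          intro _ x' hx' z' hz'
          simp at hx'; subst hx'
          have : (x :: h :: (Q1 ++ [h'])).getLast? = some h' := by
            rw [← List.cons_append, ← List.cons_append, List.getLast?_append]; simp
          rw [this] at hz'
          simp at hz'; subst hz'
          exact rx'.symm)
      have c1 : Cov G c 1 (x :: h :: (Q1 ++ [h'])).toFinset := by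
        refine Cov.one (b := b) ?_
        convert cyc using 1
        ext v
        simp only [List.mem_toFinset, Set.mem_ofPred_eq]
      have c2 := Cov.singles G c ((K.erase x) \ {h, h'})
      have hc2 : ((K.erase x) \ {h, h'}).card ≤ 4 := by
        refine (Finset.card_le_card Finset.sdiff_subset).trans ?_
        rw [Finset.card_erase_of_mem (by rw [hKdef]; simp [hx, hxy]), hKc]
      have c3 := (c1.union c2 (by
        rw [Finset.disjoint_left]
        intro v hv hv'
        simp only [Finset.mem_sdiff, Finset.mem_erase, hKdef, Finset.mem_union,
          Finset.mem_insert, Finset.mem_singleton, List.mem_toFinset, List.mem_cons,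
          List.mem_append, List.not_mem_nil] at hv hv'
        have := fun hm => (mS1 v).1 (p3' v hm)
        tauto)).mono (by omega : _ ≤ 5)
      convert c3 using 1
      rw [← hQ]
      ext v
      have e1 : v = x → v ∈ K := by rintro rfl; rw [hKdef]; simp [hx, hxy]
      have e2 : v = h → v ∈ K := by rintro rfl; rw [hKdef]; simp [hh.1, nyh.symm]
      have e3 : v = h' → v ∈ K := by rintro rfl; rw [hKdef]; simp [hh'.1, nyh'.symm]
      simp only [Finset.mem_sdiff, Finset.mem_erase, Finset.mem_union,
          Finset.mem_insert, Finset.mem_singleton, List.mem_toFinset, List.mem_cons,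
          List.mem_append, List.not_mem_nil]
      clear * - e1 e2 e3
      by_cases a1 : v = x
      · simp [a1, a1 ▸ e1 a1]
      by_cases a2 : v = h
      · simp [a2, a2 ▸ e2 a2]
      by_cases a3 : v = h'
      · simp [a3, a3 ▸ e3 a3]
      simp [a1, a2, a3]
  have mK : ∀ v, v ∈ K ↔ v ≠ y ∧ (v ∈ H0 ∨ v ∈ H1) := by intro v; rw [hKdef]; simp
  have fin1 := q6.union hy2 (by
    rw [Finset.disjoint_left]
    intro v hv hv'
    rw [Finset.mem_sdiff] at hv
    rcases Finset.mem_insert.1 hv' with rfl | h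
    · exact (n0 v hv.1).1 hy
    · exact hv.2 h)
  have fin2 := p6.union hK (by
    rw [Finset.disjoint_left]
    intro v hv hv'
    rw [Finset.mem_sdiff] at hv
    rcases Finset.mem_union.1 hv' with h | h
    · exact hv.2 h
    · have := (mS1 v).1 hv.1
      have := (mK v).1 h
      tauto)
  have e1 : ∀ v, v ∈ S2 \ Q2.toFinset ∪ insert y Q2.toFinset ↔ v ∈ S2 ∨ v = y := by
    intro v
    have := q3' v
    simp only [Finset.mem_union, Finset.mem_sdiff, Finset.mem_insert, List.mem_toFinset]
    tauto
  have e2 : ∀ v, v ∈ S1 \ Q1.toFinset ∪ (Q1.toFinset ∪ K) ↔ v ∈ S1 ∨ v ∈ K := by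
    intro v
    have := p3' v
    simp only [Finset.mem_union, Finset.mem_sdiff, List.mem_toFinset]
    tauto
  have fin := fin1.union fin2 (by
    rw [Finset.disjoint_left]
    intro v hv hv'
    rw [e1] at hv
    rw [e2, mS1, mK] at hv'
    rcases hv with hv | rfl
    · have := n0 v hv
      tauto
    · tauto)
  convert fin using 1
  ext v
  rw [Finset.mem_union, e1, e2, mS1, mK]
  simp only [Finset.mem_univ, true_iff]
  by_cases hvy : v = y
  · simp [hvy]
  · tauto

/-- A monochromatic `K_{3,3}`. -/
lemma hub [DecidableEq V] (c : Sym2 V → Bool) (A B : Finset V) (hA : 5 ≤ A.card)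
    (hB : 64 < B.card) :
    ∃ b, ∃ H0 ⊆ A, ∃ H1 ⊆ B, H0.card = 3 ∧ H1.card = 3 ∧ ∀ x ∈ H0, ∀ y ∈ H1, c s(x, y) = b := by
  obtain ⟨A', hA', hA5⟩ := Finset.exists_subset_card_eq hA
  obtain ⟨p, hp, hp2⟩ := Finset.exists_lt_card_fiber_of_mul_lt_card_of_maps_to
    (s := B) (t := A'.powerset) (n := 2) (f := fun y => A'.filter (fun x => c s(x, y) = true))
    (fun y _ => by simp) (by rw [Finset.card_powerset, hA5]; omega)
  obtain ⟨H1, hH1, hH1c⟩ := Finset.exists_subset_card_eq (show 3 ≤ _ from hp2)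
  rw [Finset.mem_powerset] at hp
  have hH1' : ∀ y ∈ H1, y ∈ B ∧ A'.filter (fun x => c s(x, y) = true) = p := by
    intro y hy; exact Finset.mem_filter.1 (hH1 hy)
  have hs : p.card + (A' \ p).card = 5 := by
    rw [Finset.card_sdiff_of_subset hp]
    have := Finset.card_le_card hp
    omega
  by_cases h3 : 3 ≤ p.card
  · obtain ⟨H0, hH0, hH0c⟩ := Finset.exists_subset_card_eq h3
    refine ⟨true, H0, (hH0.trans hp).trans hA', H1, fun y hy => (hH1' y hy).1, hH0c, hH1c, ?_⟩
    intro x hx y hy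
    have := hH0 hx
    rw [← (hH1' y hy).2, Finset.mem_filter] at this
    exact this.2
  · obtain ⟨H0, hH0, hH0c⟩ := Finset.exists_subset_card_eq (by omega : 3 ≤ (A' \ p).card)
    refine ⟨false, H0, (hH0.trans Finset.sdiff_subset).trans hA', H1,
      fun y hy => (hH1' y hy).1, hH0c, hH1c, ?_⟩
    intro x hx y hy
    have := Finset.mem_sdiff.1 (hH0 hx)
    rw [← (hH1' y hy).2, Finset.mem_filter] at this
    have h2 := this.2
    simpa [this.1] using h2

lemma main [Fintype V] [DecidableEq V] (f : V → Bool) (G : SimpleGraph V) (c : Sym2 V → Bool)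
    (hG : ∀ x y, G.Adj x y ↔ f x ≠ f y)
    (hbal : (Finset.univ.filter (fun x => f x = true)).card =
      (Finset.univ.filter (fun x => f x = false)).card)
    (hbig : 64 < (Finset.univ.filter (fun x => f x = true)).card) :
    Cov G c 12 Finset.univ := by
  obtain ⟨b, H0, hA, H1, hB, h0, h1, hH⟩ := hub c (Finset.univ.filter (fun x => f x = false))
    (Finset.univ.filter (fun x => f x = true)) (by omega) hbig
  have hf0 : ∀ x ∈ H0, f x = false := fun x hx => (Finset.mem_filter.1 (hA hx)).2
  have hf1 : ∀ x ∈ H1, f x = true := fun x hx => (Finset.mem_filter.1 (hB hx)).2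
  obtain ⟨R0, hR0⟩ : ∃ R0 : Finset V, ∀ v, v ∈ R0 ↔ v ∉ H0 ∧ v ∉ H1 ∧ f v = false ∧
      (H1.filter (fun h => c s(v, h) = b)).card ≤ 1 :=
    ⟨Finset.univ.filter (fun v => v ∉ H0 ∧ v ∉ H1 ∧ f v = false ∧
      (H1.filter (fun h => c s(v, h) = b)).card ≤ 1), fun v => by rw [Finset.mem_filter]; simp⟩
  obtain ⟨R1, hR1⟩ : ∃ R1 : Finset V, ∀ v, v ∈ R1 ↔ v ∉ H0 ∧ v ∉ H1 ∧ f v = true ∧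
      (H0.filter (fun h => c s(v, h) = b)).card ≤ 1 :=
    ⟨Finset.univ.filter (fun v => v ∉ H0 ∧ v ∉ H1 ∧ f v = true ∧
      (H0.filter (fun h => c s(v, h) = b)).card ≤ 1), fun v => by rw [Finset.mem_filter]; simp⟩
  rcases le_total R0.card R1.card with h | h
  · exact core f G c hG b hbal H0 H1 R0 R1 h0 h1 hf0 hf1 hH hR0 hR1 h
  · refine core (fun v => !(f v)) G c (fun x y => by rw [hG]; simp) b ?_ H1 H0 R1 R0 h1 h0
      (fun x hx => by simp [hf1 x hx]) (fun x hx => by simp [hf0 x hx])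
      (fun x hx y hy => by rw [Sym2.eq_swap]; exact hH y hy x hx) ?_ ?_ h
    · simpa using hbal.symm
    · intro v; rw [hR1]; simp only [Bool.not_eq_false']; tauto
    · intro v; rw [hR0]; simp only [Bool.not_eq_true']; tauto

end CycPart

/-- There is an `n₀` such that every fair (i.e. balanced) complete bipartite graph on more
than `n₀` vertices whose edges are coloured red and blue can be partitioned into 12
vertex-disjoint monochromatic (possibly degenerate) cycles. -/
theorem stmt4 :
    ∃ n₀ : ℕ, ∀ (V : Type) [Fintype V],
      ∀ (f : V → Fin 2) (G : SimpleGraph V) (c : Sym2 V → Bool),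
        Function.Surjective f → (∀ x y, G.Adj x y ↔ f x ≠ f y) →
        (∀ i : Fin 2, 2 * ({v | f v = i} : Set V).ncard ≤ Fintype.card V) →
        n₀ < Fintype.card V →
        ∃ S : Fin 12 → Set V, (∀ i, ∃ b, IsMonoCycleSet G c b (S i)) ∧
          (∀ i j, i ≠ j → Disjoint (S i) (S j)) ∧ (⋃ i, S i) = Set.univ := by
  classical
  refine ⟨200, ?_⟩
  intro V _ f G c _ hG hfair hn
  let g : V → Bool := fun v => decide (f v = 1)
  have hg : ∀ x y, G.Adj x y ↔ g x ≠ g y := by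
    intro x y
    rw [hG]
    simp only [g]
    generalize f x = p
    generalize f y = q
    revert p q
    decide
  have h0 := hfair 0
  have h1 := hfair 1
  have e0 : ({v | f v = 0} : Set V).ncard = (Finset.univ.filter (fun x => g x = false)).card := by
    rw [← Set.ncard_coe_finset]
    congr 1
    ext v
    simp only [g, Set.mem_ofPred_eq, Finset.coe_filter, Finset.mem_univ, true_and]
    generalize f v = p
    revert p
    decide
  have e1 : ({v | f v = 1} : Set V).ncard = (Finset.univ.filter (fun x => g x = true)).card := by
    rw [← Set.ncard_coe_finset]
    congr 1
    ext v
    simp [g]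
  have hs : (Finset.univ.filter (fun x => g x = true)).card +
      (Finset.univ.filter (fun x => g x = false)).card = Fintype.card V := by
    rw [← Finset.card_univ,
      ← Finset.card_filter_add_card_filter_not (s := Finset.univ) (fun x => g x = true)]
    simp
  rw [e0] at h0
  rw [e1] at h1
  obtain ⟨L, l1, l2, l3, l4⟩ := CycPart.main g G c hg (by omega) (by omega)
  refine ⟨fun i => L.getD i ∅, ?_, ?_, ?_⟩
  · intro i
    by_cases hi : (i : ℕ) < L.length
    · simp only [List.getD_eq_getElem _ _ hi]
      exact l2 _ (List.getElem_mem hi)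
    · simp only [List.getD_eq_default _ _ (not_lt.1 hi)]
      exact ⟨true, Or.inl rfl⟩
  · intro i j hij
    by_cases hi : (i : ℕ) < L.length
    · by_cases hj : (j : ℕ) < L.length
      · simp only [List.getD_eq_getElem _ _ hi, List.getD_eq_getElem _ _ hj]
        rw [List.pairwise_iff_getElem] at l3
        rcases lt_or_gt_of_ne (fun h => hij (Fin.ext h) : (i : ℕ) ≠ j) with h | h
        · exact l3 _ _ hi hj h
        · exact (l3 _ _ hj hi h).symm
      · simp only [List.getD_eq_default _ _ (not_lt.1 hj)]
        exact Set.disjoint_empty _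
    · simp only [List.getD_eq_default _ _ (not_lt.1 hi)]
      exact Set.empty_disjoint _
  · ext v
    simp only [Set.mem_iUnion, Set.mem_univ, iff_true]
    obtain ⟨s, hs, hv⟩ := (l4 v).1 (Finset.mem_univ v)
    obtain ⟨k, hk, rfl⟩ := List.getElem_of_mem hs
    refine ⟨⟨k, by omega⟩, ?_⟩
    simp only [List.getD_eq_getElem _ _ hk]
    exact hv
end

section
/- Let G be a fair complete k-partite graph on n vertices with k ≥ 3. Then the partition of V(G) into its k classes can be coarsened to a partition into exactly 3 nonempty classes, each of which is a union of original partition classes and contains at most n/2 vertices. Equivalently, G has a spanning subgraph, obtained by deleting all edges between certain original classes, which is a fair complete tripartite graph. -/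
open SimpleGraph Set

theorem stmt5_merge {V : Type*} [Fintype V] (k : ℕ) (p : ℕ) (hp : p < k)
    (f : V → Fin (k + 1)) (hf : Function.Surjective f)
    (hfair : ∀ i : Fin (k + 1), 2 * ({v | f v = i} : Set V).ncard ≤ Fintype.card V)
    (hs : 2 * (({v | (f v : ℕ) = p} : Set V).ncard + ({v | (f v : ℕ) = p + 1} : Set V).ncard)
      ≤ Fintype.card V) :
    ∃ m : Fin (k + 1) → Fin k, Function.Surjective (m ∘ f) ∧
      ∀ i : Fin k, 2 * ({v | m (f v) = i} : Set V).ncard ≤ Fintype.card V := by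
  refine ⟨fun x => ⟨if (x : ℕ) ≤ p then x else x - 1, by split_ifs <;> omega⟩, ?_, ?_⟩
  · intro y
    by_cases h : (y : ℕ) ≤ p
    · obtain ⟨v, hv⟩ := hf ⟨y, by omega⟩
      refine ⟨v, ?_⟩
      ext
      simp [hv, h]
    · obtain ⟨v, hv⟩ := hf ⟨y + 1, by omega⟩
      refine ⟨v, ?_⟩
      ext
      simp only [Function.comp, hv]
      split_ifs <;> omega
  · intro i
    rcases lt_trichotomy (i : ℕ) p with h | h | h
    · refine le_trans (Nat.mul_le_mul_left 2 (Set.ncard_le_ncard ?_ (Set.toFinite _)))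
        (hfair ⟨i, by omega⟩)
      intro v hv
      simp only [Set.mem_setOf_eq, Fin.ext_iff] at hv ⊢
      split_ifs at hv <;> omega
    · refine le_trans (Nat.mul_le_mul_left 2 ?_) hs
      refine le_trans (Set.ncard_le_ncard ?_ (Set.toFinite _)) (Set.ncard_union_le _ _)
      intro v hv
      simp only [Set.mem_setOf_eq, Fin.ext_iff, Set.mem_union] at hv ⊢
      split_ifs at hv <;> omega
    · refine le_trans (Nat.mul_le_mul_left 2 (Set.ncard_le_ncard ?_ (Set.toFinite _)))
        (hfair ⟨i + 1, by omega⟩)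
      intro v hv
      simp only [Set.mem_setOf_eq, Fin.ext_iff] at hv ⊢
      split_ifs at hv <;> omega

theorem stmt5_four {V : Type*} [Fintype V] (f : V → ℕ) (k : ℕ) (hk : 3 ≤ k) :
    ({v | f v = 0} : Set V).ncard + ({v | f v = 0 + 1} : Set V).ncard
      + (({v | f v = k - 1} : Set V).ncard + ({v | f v = k - 1 + 1} : Set V).ncard)
      ≤ Fintype.card V := by
  have hd : ∀ a b : ℕ, a ≠ b → Disjoint ({v | f v = a} : Set V) {v | f v = b} := by
    intro a b hab
    rw [Set.disjoint_left]
    intro v hv hw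
    simp only [Set.mem_setOf_eq] at hv hw
    omega
  rw [← Set.ncard_union_eq (hd _ _ (by omega)) (Set.toFinite _) (Set.toFinite _),
    ← Set.ncard_union_eq (hd _ _ (by omega)) (Set.toFinite _) (Set.toFinite _),
    ← Set.ncard_union_eq ?_ (Set.toFinite _) (Set.toFinite _), ← Nat.card_eq_fintype_card,
    ← Set.ncard_univ]
  · exact Set.ncard_le_ncard (Set.subset_univ _) (Set.toFinite _)
  · rw [Set.disjoint_left]
    intro v hv hw
    simp only [Set.mem_setOf_eq, Set.mem_union] at hv hw
    omega

/-- The partition of a fair complete `k`-partite graph (`k ≥ 3`) into its `k` classes can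
be coarsened to a partition into exactly 3 nonempty classes (each a union of original
classes) each containing at most half of the vertices. -/
theorem stmt5 {V : Type*} [Fintype V] (k : ℕ) (hk : 3 ≤ k)
    (f : V → Fin k) (hf : Function.Surjective f)
    (hfair : ∀ i : Fin k, 2 * ({v | f v = i} : Set V).ncard ≤ Fintype.card V) :
    ∃ g : Fin k → Fin 3, Function.Surjective (g ∘ f) ∧
      ∀ j : Fin 3, 2 * ({v | g (f v) = j} : Set V).ncard ≤ Fintype.card V := by
  induction k, hk using Nat.le_induction with
  | base => exact ⟨id, by simpa using hf, by simpa using hfair⟩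
  | succ k hk ih =>
    have h4 := stmt5_four (fun v => (f v : ℕ)) k hk
    have key : ∃ m : Fin (k + 1) → Fin k, Function.Surjective (m ∘ f) ∧
        ∀ i : Fin k, 2 * ({v | m (f v) = i} : Set V).ncard ≤ Fintype.card V := by
      by_cases h : 2 * (({v | (f v : ℕ) = 0} : Set V).ncard
          + ({v | (f v : ℕ) = 0 + 1} : Set V).ncard) ≤ Fintype.card V
      · exact stmt5_merge k 0 (by omega) f hf hfair h
      · exact stmt5_merge k (k - 1) (by omega) f hf hfair (by omega)
    obtain ⟨m, hm, hm2⟩ := key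
    obtain ⟨g, hg, hg2⟩ := ih (m ∘ f) hm hm2
    exact ⟨g ∘ m, hg, hg2⟩
end

section
/- Let G be a complete tripartite graph with partition classes V₁, V₂, V₃ of sizes n₁, n₂, n₃, whose edges are coloured red and blue, and suppose n₁ = n₂ and n₃ = 1. Then there exist a red path R and a blue path B in G whose vertex sets intersect in exactly one vertex x, which is an endvertex of both R and B, and such that V(R) ∪ V(B) = V(G). -/
open SimpleGraph Set

section Helpers

/-- Adjacency in colour `b` (in the complete multipartite graph with class map `f`). -/
def MRel {V : Type*} (f : V → Fin 3) (c : Sym2 V → Bool) (b : Bool) (x y : V) : Prop :=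
  f x ≠ f y ∧ c s(x, y) = b

lemma MRel.symm' {V : Type*} {f : V → Fin 3} {c : Sym2 V → Bool} {b : Bool} {x y : V}
    (h : MRel f c b x y) : MRel f c b y x :=
  ⟨h.1.symm, by rw [Sym2.eq_swap]; exact h.2⟩

lemma MRel.chain_reverse {V : Type*} {f : V → Fin 3} {c : Sym2 V → Bool} {b : Bool} {l : List V}
    (h : l.IsChain (MRel f c b)) : l.reverse.IsChain (MRel f c b) := by
  rw [List.isChain_reverse]
  exact h.imp (fun _ _ h => h.symm')

/-- Interleaving of two lists. -/
def zz {V : Type*} : List V → List V → List V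
  | [], _ => []
  | x :: xs, ys => x :: zz ys xs
  termination_by xs ys => xs.length + ys.length
  decreasing_by simp; omega

@[simp] lemma zz_nil {V : Type*} (ys : List V) : zz [] ys = [] := by rw [zz]
@[simp] lemma zz_cons {V : Type*} (x : V) (xs ys : List V) :
    zz (x :: xs) ys = x :: zz ys xs := by rw [zz]

lemma zz_head {V : Type*} (xs ys : List V) : (zz xs ys).head? = xs.head? := by
  cases xs <;> simp

lemma zz_count {V : Type*} [DecidableEq V] (a : V) (xs ys : List V)
    (h : xs.length = ys.length ∨ xs.length = ys.length + 1) :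
    (zz xs ys).count a = xs.count a + ys.count a := by
  induction xs, ys using zz.induct with
  | case1 ys => 
    have : ys = [] := by 
      apply List.eq_nil_of_length_eq_zero
      simp at h; omega
    simp [this]
  | case2 x xs ys ih =>
    have := ih (by simp at h; omega)
    simp only [zz_cons, List.count_cons, this]; omega

lemma zz_length {V : Type*} (xs ys : List V)
    (h : xs.length = ys.length ∨ xs.length = ys.length + 1) :
    (zz xs ys).length = xs.length + ys.length := by
  induction xs, ys using zz.induct with
  | case1 ys => simp at h; simp; omega
  | case2 x xs ys ih =>
    have := ih (by simp at h; omega)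
    simp only [zz_cons, List.length_cons, this]; omega

lemma zz_chain {V : Type*} {f : V → Fin 3} {c : Sym2 V → Bool} {b : Bool} (xs ys : List V)
    (h : ∀ x ∈ xs, ∀ y ∈ ys, MRel f c b x y) : (zz xs ys).IsChain (MRel f c b) := by
  induction xs, ys using zz.induct with
  | case1 ys => simp
  | case2 x xs ys ih =>
    have h1 := ih (fun y hy x' hx' => (h x' (by simp [hx']) y hy).symm')
    rw [zz_cons, List.isChain_cons]
    refine ⟨?_, h1⟩
    intro y hy
    rw [zz_head] at hy
    exact h x (by simp) y (List.mem_of_mem_head? hy)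

lemma zz_last {V : Type*} (xs ys : List V) :
    (xs.length = ys.length → ∀ a ∈ (zz xs ys).getLast?, a ∈ ys) ∧ 
    (xs.length = ys.length + 1 → ∀ a ∈ (zz xs ys).getLast?, a ∈ xs) := by
  induction xs, ys using zz.induct with
  | case1 ys => simp
  | case2 x xs ys ih =>
    rw [zz_cons]
    constructor
    · intro h a ha
      cases ys with
      | nil => simp at h
      | cons y ys => 
        apply ih.2 (by simp at h ⊢; omega) 
        simpa [List.getLast?_cons_cons] using ha
    · intro h a ha
      cases ys with
      | nil => simp at ha; simp [ha]
      | cons y ys => 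
        right
        apply ih.1 (by simp at h ⊢; omega) 
        simpa [List.getLast?_cons_cons] using ha

lemma zz_of_alt {V : Type*} (f : V → Fin 3) (l : List V) 
    (hc : l.IsChain (fun x y => f x ≠ f y)) : ∀ (i j : Fin 3), 
    (∀ a ∈ l, f a = i ∨ f a = j) → (∀ a ∈ l.head?, f a = i) → 
    ∃ Q1 Q2, l = zz Q1 Q2 ∧ (∀ a ∈ Q1, f a = i) ∧ (∀ a ∈ Q2, f a = j) ∧
      (Q1.length = Q2.length ∨ Q1.length = Q2.length + 1) := by
  induction l with
  | nil => intro i j _ _; exact ⟨[], [], by simp⟩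
  | cons a l ih =>
    intro i j h1 h2
    rw [List.isChain_cons] at hc
    have ha : f a = i := h2 a (by simp)
    obtain ⟨Q1, Q2, e, q1, q2, hl⟩ := ih hc.2 j i (fun x hx => (h1 x (by simp [hx])).symm) (by
      intro x hx
      have := hc.1 x hx
      rcases h1 x (by simp [List.mem_of_mem_head? hx]) with h | h
      · rw [ha, h] at this; exact absurd rfl this
      · exact h)
    refine ⟨a :: Q2, Q1, by simp [e], ?_, q1, by simp; omega⟩
    intro x hx
    rcases List.mem_cons.1 hx with rfl | hx
    · exact ha
    · exact q2 x hx

/-- Red/blue path partition with common endvertex, of the vertices of `L`. -/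
def Good {V : Type*} (f : V → Fin 3) (c : Sym2 V → Bool) (L : List V) : Prop :=
  ∃ x R B, (x :: R).IsChain (MRel f c true) ∧ (x :: B).IsChain (MRel f c false) ∧
    (x :: (R ++ B)).Perm L

lemma Good.perm {V : Type*} {f : V → Fin 3} {c : Sym2 V → Bool} {L L' : List V}
    (h : Good f c L) (hp : L.Perm L') : Good f c L' := by
  obtain ⟨x, R, B, h1, h2, h3⟩ := h
  exact ⟨x, R, B, h1, h2, h3.trans hp⟩

lemma good_join {V : Type*} {f : V → Fin 3} {c : Sym2 V → Bool} {R B : List V}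
    (hR : R.IsChain (MRel f c true)) (hB : B.IsChain (MRel f c false))
    (hne : R ++ B ≠ []) (h : ∀ x ∈ R.head?, ∀ y ∈ B.head?, f x ≠ f y) : Good f c (R ++ B) := by
  cases R with
  | nil =>
    cases B with
    | nil => simp at hne
    | cons y B => exact ⟨y, [], B, by simp, hB, by simp⟩
  | cons x R =>
    cases B with
    | nil => exact ⟨x, R, [], hR, by simp, by simp⟩
    | cons y B =>
      have hxy := h x (by simp) y (by simp)
      cases hc : c s(x, y) with
      | true =>
        refine ⟨y, x :: R, B, ?_, hB, ?_⟩
        · rw [List.isChain_cons_cons]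
          exact ⟨MRel.symm' ⟨hxy, hc⟩, hR⟩
        · exact List.perm_middle.symm
      | false =>
        refine ⟨x, R, y :: B, hR, ?_, by simp⟩
        rw [List.isChain_cons_cons]
        exact ⟨⟨hxy, hc⟩, hB⟩

lemma Good.insert {V : Type*} {f : V → Fin 3} {c : Sym2 V → Bool} {L : List V} {z : V}
    (h : Good f c L) (hz : ∀ a ∈ L, f z ≠ f a) : Good f c (z :: L) := by
  classical
  obtain ⟨x, R, B, h1, h2, h3⟩ := h
  have hx : f z ≠ f x := hz x (h3.subset (by simp))
  cases hc : c s(z, x) with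
  | true =>
    have zx : MRel f c true z x := ⟨hx, hc⟩
    cases B with
    | nil => 
      refine ⟨z, x :: R, [], by simp [h1, zx], by simp, ?_⟩
      simpa using h3
    | cons b B =>
      have hb : f z ≠ f b := hz b (h3.subset (by simp))
      cases hc' : c s(z, b) with
      | true => 
        have zb : MRel f c true z b := ⟨hb, hc'⟩
        refine ⟨b, z :: x :: R, B, by simp [h1, zx, zb.symm'], ?_, ?_⟩
        · exact h2.tail
        · rw [List.perm_iff_count] at h3 ⊢
          intro a
          have := h3 a
          simp only [List.count_cons, List.count_append] at this ⊢
          omega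
      | false =>
        have zb : MRel f c false z b := ⟨hb, hc'⟩
        refine ⟨z, x :: R, b :: B, by simp [h1, zx], ?_, ?_⟩
        · rw [List.isChain_cons_cons]; exact ⟨zb, h2.tail⟩
        · simpa using h3
  | false =>
    have zx : MRel f c false z x := ⟨hx, hc⟩
    cases R with
    | nil => 
      refine ⟨z, [], x :: B, by simp, by simp [h2, zx], ?_⟩
      simpa using h3
    | cons b R =>
      have hb : f z ≠ f b := hz b (h3.subset (by simp))
      cases hc' : c s(z, b) with
      | false => 
        have zb : MRel f c false z b := ⟨hb, hc'⟩
        refine ⟨b, R, z :: x :: B, h1.tail, by simp [h2, zx, zb.symm'], ?_⟩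
        · rw [List.perm_iff_count] at h3 ⊢
          intro a
          have := h3 a
          simp only [List.count_cons, List.count_append] at this ⊢
          omega
      | true =>
        have zb : MRel f c true z b := ⟨hb, hc'⟩
        refine ⟨z, b :: R, x :: B, ?_, by simp [h2, zx], ?_⟩
        · rw [List.isChain_cons_cons]; exact ⟨zb, h1.tail⟩
        · rw [List.perm_iff_count] at h3 ⊢
          intro a
          have := h3 a
          simp only [List.count_cons, List.count_append] at this ⊢
          omega

lemma chain_rev_append {V : Type*} {f : V → Fin 3} {c : Sym2 V → Bool} {b : Bool} {l m : List V}
    (hl : l.IsChain (MRel f c b)) (hm : m.IsChain (MRel f c b))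
    (h : ∀ x ∈ l.head?, ∀ y ∈ m.head?, MRel f c b x y) : 
    (l.reverse ++ m).IsChain (MRel f c b) := by
  rw [List.isChain_append]
  refine ⟨MRel.chain_reverse hl, hm, ?_⟩
  simpa using h

lemma good_P {V : Type*} {f : V → Fin 3} {c : Sym2 V → Bool} {Q1 Q2 B : List V}
    (hl : Q1.length = Q2.length) (h1 : ∀ a ∈ Q1, f a = 0) (h2 : ∀ a ∈ Q2, f a = 1)
    (hP : (zz Q2 Q1).IsChain (MRel f c true)) (hB : B.IsChain (MRel f c false))
    (hne : B ≠ []) (h : ∀ y ∈ B.head?, f y ≠ 2) : Good f c (zz Q2 Q1 ++ B) := by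
  cases B with
  | nil => simp at hne
  | cons y B =>
    have hy := h y (by simp)
    have : f y = 0 ∨ f y = 1 := by omega
    rcases this with hy | hy
    · apply good_join hP hB (by simp)
      intro x hx y' hy'
      simp at hy'; subst hy'
      rw [zz_head] at hx
      rw [h2 x (List.mem_of_mem_head? hx), hy]; decide
    · have : Good f c ((zz Q2 Q1).reverse ++ y :: B) := by
        apply good_join (MRel.chain_reverse hP) hB (by simp)
        intro x hx y' hy'
        simp at hy'; subst hy'
        rw [List.head?_reverse] at hx
        rw [h1 x ((zz_last Q2 Q1).1 hl.symm x hx), hy]; decide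
      exact this.perm ((List.reverse_perm _).append_right _)

lemma bip_path {V : Type*} {f : V → Fin 3} {c : Sym2 V → Bool} {b : Bool} {S1 S2 : List V}
    (hl : S1.length = S2.length) (h : ∀ x ∈ S1, ∀ y ∈ S2, MRel f c b x y) (s : V)
    (hs : s ∈ S1 ++ S2) : ∃ l : List V, l.IsChain (MRel f c b) ∧ l.Perm (S1 ++ S2) ∧ l.head? = some s := by
  classical
  rcases List.mem_append.1 hs with hs | hs
  · have hp := List.perm_cons_erase hs
    refine ⟨zz (s :: S1.erase s) S2, ?_, ?_, by simp⟩
    · exact zz_chain _ _ (fun x hx => h x (hp.symm.subset hx))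
    · rw [List.perm_iff_count]
      intro a
      rw [zz_count _ _ _ (Or.inl (by rw [← hp.length_eq, hl])), ← hp.count_eq, List.count_append]
  · have hp := List.perm_cons_erase hs
    refine ⟨zz (s :: S2.erase s) S1, ?_, ?_, by simp⟩
    · exact zz_chain _ _ (fun x hx y hy => (h y hy x (hp.symm.subset hx)).symm')
    · rw [List.perm_iff_count]
      intro a
      rw [zz_count _ _ _ (Or.inl (by rw [← hp.length_eq, hl])), ← hp.count_eq, List.count_append]
      omega

lemma dfs {V : Type*} [DecidableEq V] (f : V → Fin 3) (c : Sym2 V → Bool) (U : List V) : 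
    ∀ k ≤ U.length, ∃ P A B : List V, (P ++ A ++ B).Perm U ∧ B.length + k = A.length + U.length ∧
      P.IsChain (MRel f c true) ∧ ∀ a ∈ A, ∀ b ∈ B, ¬ MRel f c true a b := by
  intro k
  induction k with
  | zero => intro _; exact ⟨[], [], U, by simp⟩
  | succ k ih =>
    intro hk
    obtain ⟨P, A, B, hp, hl, hP, hAB⟩ := ih (by omega)
    by_cases hex : ∃ b ∈ B, ∀ x ∈ P.head?, MRel f c true b x
    · obtain ⟨b, hb, hx⟩ := hex
      have hpb := List.perm_cons_erase hb
      refine ⟨b :: P, A, B.erase b, ?_, ?_, ?_, ?_⟩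
      · rw [List.perm_iff_count] at hp hpb ⊢
        intro a
        have := hp a
        have := hpb a
        simp only [List.count_cons, List.count_append] at *
        omega
      · have := hpb.length_eq
        simp only [List.length_cons] at this
        omega
      · rw [List.isChain_cons]; exact ⟨hx, hP⟩
      · intro a ha b' hb'
        exact hAB a ha b' (List.mem_of_mem_erase hb')
    · push Not at hex
      cases P with
      | nil =>
        cases B with
        | nil => simp at hl; omega
        | cons b B => 
          have := hex b (by simp)
          simp at this
      | cons x P =>
        refine ⟨P, x :: A, B, ?_, ?_, hP.tail, ?_⟩
        · rw [List.perm_iff_count] at hp ⊢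
          intro a
          have := hp a
          simp only [List.count_cons, List.count_append] at *
          omega
        · simp only [List.length_cons]; omega
        · intro a ha b hb
          rcases List.mem_cons.1 ha with rfl | ha
          · obtain ⟨y, hy, h⟩ := hex b hb
            simp at hy; subst hy
            exact fun h' => h h'.symm'
          · exact hAB a ha b hb

lemma walk_of_chain {V : Type*} {f : V → Fin 3} {c : Sym2 V → Bool} {b : Bool}
    (G : SimpleGraph V) (hG : ∀ x y, G.Adj x y ↔ f x ≠ f y) (L : List V) : ∀ (x : V),
    (x :: L).IsChain (MRel f c b) → 
    ∃ (u : V) (p : G.Walk x u), p.support = x :: L ∧ ∀ e ∈ p.edges, c e = b := by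
  induction L with
  | nil => intro x _; exact ⟨x, .nil, by simp⟩
  | cons y L ih =>
    intro x h
    rw [List.isChain_cons_cons] at h
    obtain ⟨u, p, h1, h2⟩ := ih y h.2
    refine ⟨u, .cons ((hG x y).2 h.1.1) p, by simp [h1], ?_⟩
    intro e he
    simp only [Walk.edges_cons, List.mem_cons] at he
    rcases he with rfl | he
    · exact h.1.2
    · exact h2 e he

lemma head_append_of_ne {V : Type*} {l m : List V} {p : V → Prop}
    (hl : ∀ x ∈ l.head?, p x) (hm : l = [] → ∀ x ∈ m.head?, p x) :
    ∀ x ∈ (l ++ m).head?, p x := by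
  cases l with
  | nil => simpa using hm rfl
  | cons a l => simpa using hl

/-- Main case: `z` is red to all of `S`, all edges between `S` and `T` are red. -/
lemma core4 {V : Type*} {f : V → Fin 3} {c : Sym2 V → Bool} {z : V}
    {Q1 Q2 S1 S2 T1 T2 : List V} (hz : f z = 2)
    (lQ : Q1.length = Q2.length) (lS : S1.length = S2.length) (lT : T1.length = T2.length)
    (q1 : ∀ a ∈ Q1, f a = 0) (q2 : ∀ a ∈ Q2, f a = 1)
    (s1 : ∀ a ∈ S1, f a = 0) (s2 : ∀ a ∈ S2, f a = 1)
    (t1 : ∀ a ∈ T1, f a = 0) (t2 : ∀ a ∈ T2, f a = 1)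
    (hP : (zz Q2 Q1).IsChain (MRel f c true))
    (hS : ∀ x ∈ S1, ∀ y ∈ S2, MRel f c false x y)
    (hT : ∀ x ∈ T1, ∀ y ∈ T2, MRel f c false x y)
    (nS : 0 < S1.length) (nT : 0 < T1.length)
    (hST : ∀ x ∈ S1, ∀ y ∈ T2, MRel f c true x y)
    (hTS : ∀ x ∈ T1, ∀ y ∈ S2, MRel f c true x y)
    (hzS : ∀ x ∈ S1 ++ S2, MRel f c true z x) :
    Good f c (z :: (zz Q2 Q1 ++ (S1 ++ S2) ++ (T1 ++ T2))) := by
  classical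
  have zS1 : ∀ x ∈ S1, MRel f c true z x := fun x hx => hzS x (by simp [hx])
  have zS2 : ∀ x ∈ S2, MRel f c true z x := fun x hx => hzS x (by simp [hx])
  by_cases ha : ∃ s ∈ S1, ∀ p ∈ (zz Q2 Q1).head?, MRel f c true s p
  · -- extend the red path through `S1`
    obtain ⟨s, hs, hsp⟩ := ha
    have hp := List.perm_cons_erase hs
    set S1' := S1.erase s with hS1'
    have hpl := hp.length_eq
    simp only [List.length_cons] at hpl
    have hsub : ∀ x ∈ S1', x ∈ S1 := fun x hx => List.mem_of_mem_erase hx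
    obtain ⟨k, hk⟩ : ∃ k, k = min S1'.length T1.length := ⟨_, rfl⟩
    have X : ((zz (s :: S1'.take k) (T2.take k)).reverse ++ zz Q2 Q1).IsChain
        (MRel f c true) := by
      apply chain_rev_append _ hP
      · intro x hx y hy
        simp at hx; subst hx
        exact hsp y hy
      · apply zz_chain
        intro x hx y hy
        refine hST x ?_ y (List.mem_of_mem_take hy)
        rcases List.mem_cons.1 hx with rfl | hx
        · exact hs
        · exact hsub x (List.mem_of_mem_take hx)
    have X2 : (z :: ((zz (s :: S1'.take k) (T2.take k)).reverse ++ zz Q2 Q1)).IsChain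
        (MRel f c true) := by
      rw [List.isChain_cons]
      refine ⟨?_, X⟩
      apply head_append_of_ne
      · intro x hx
        rw [List.head?_reverse] at hx
        have := (zz_last _ _).2 (by simp; omega) x hx
        apply zS1
        rcases List.mem_cons.1 this with rfl | hx
        · exact hs
        · exact hsub x (List.mem_of_mem_take hx)
      · simp
    have X3 : ((zz (S2.take (k+1)) (T1.take k)).reverse ++
        z :: ((zz (s :: S1'.take k) (T2.take k)).reverse ++ zz Q2 Q1)).IsChain
        (MRel f c true) := by
      apply chain_rev_append _ X2
      · intro x hx y hy
        simp at hy; subst hy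
        rw [zz_head] at hx
        exact (zS2 x (List.mem_of_mem_take (List.mem_of_mem_head? hx))).symm'
      · apply zz_chain
        intro x hx y hy
        exact (hTS y (List.mem_of_mem_take hy) x (List.mem_of_mem_take hx)).symm'
    have Y : (zz (S1'.drop k) (S2.drop (k+1)) ++ zz (T1.drop k) (T2.drop k)).IsChain
        (MRel f c false) := by
      have Y1 : (zz (S1'.drop k) (S2.drop (k+1))).IsChain (MRel f c false) :=
        zz_chain _ _ (fun x hx y hy => 
          hS x (hsub x (List.mem_of_mem_drop hx)) y (List.mem_of_mem_drop hy))
      have Y2 : (zz (T1.drop k) (T2.drop k)).IsChain (MRel f c false) :=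
        zz_chain _ _ (fun x hx y hy => hT x (List.mem_of_mem_drop hx) y (List.mem_of_mem_drop hy))
      rcases le_total S1'.length T1.length with h | h
      · rw [List.drop_eq_nil_of_le (as := S1') (by omega)]; simpa using Y2
      · rw [List.drop_eq_nil_of_le (as := T1) (by omega)]; simpa using Y1
    refine (good_join X3 Y (by simp) ?_).perm ?_
    · intro x hx y hy
      have hx1 : f x = 1 := by
        revert x
        apply head_append_of_ne
        · intro x hx
          rw [List.head?_reverse] at hx
          exact s2 x (List.mem_of_mem_take ((zz_last _ _).2 (by simp; omega) x hx))
        · intro h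
          have := congrArg List.length h
          rw [List.length_reverse, zz_length _ _ (by simp; omega)] at this
          simp only [List.length_take, List.length_nil] at this; omega
      have hy0 : f y = 0 := by
        revert y
        apply head_append_of_ne
        · intro y hy
          rw [zz_head] at hy
          exact s1 y (hsub y (List.mem_of_mem_drop (List.mem_of_mem_head? hy)))
        · intro _ y hy
          rw [zz_head] at hy
          exact t1 y (List.mem_of_mem_drop (List.mem_of_mem_head? hy))
      rw [hx1, hy0]; decide
    · rw [List.perm_iff_count]
      intro a
      have e1 := hp.count_eq a
      have e2 : (S1'.take k).count a + (S1'.drop k).count a = S1'.count a := by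
        rw [← List.count_append, List.take_append_drop]
      have e3 : (S2.take (k+1)).count a + (S2.drop (k+1)).count a = S2.count a := by
        rw [← List.count_append, List.take_append_drop]
      have e4 : (T1.take k).count a + (T1.drop k).count a = T1.count a := by
        rw [← List.count_append, List.take_append_drop]
      have e5 : (T2.take k).count a + (T2.drop k).count a = T2.count a := by
        rw [← List.count_append, List.take_append_drop]
      have f1 := zz_count a (S2.take (k+1)) (T1.take k) (by simp; omega)
      have f2 := zz_count a (s :: S1'.take k) (T2.take k) (by simp; omega)
      have f3 := zz_count a (S1'.drop k) (S2.drop (k+1)) (by simp; omega)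
      have f4 := zz_count a (T1.drop k) (T2.drop k) (by simp; omega)
      simp only [List.count_append, List.count_cons, List.count_reverse] at *
      omega
  by_cases hb : ∃ s ∈ T1, ∀ p ∈ (zz Q2 Q1).head?, MRel f c true s p
  · -- extend the red path through `T1`
    obtain ⟨t, ht, htp⟩ := hb
    have hp := List.perm_cons_erase ht
    set T1' := T1.erase t with hT1'
    have hpl := hp.length_eq
    simp only [List.length_cons] at hpl
    have hsub : ∀ x ∈ T1', x ∈ T1 := fun x hx => List.mem_of_mem_erase hx
    obtain ⟨k, hk⟩ : ∃ k, k = min (S1.length - 1) T1'.length := ⟨_, rfl⟩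
    have X : ((zz (t :: T1'.take k) (S2.take (k+1))).reverse ++ zz Q2 Q1).IsChain
        (MRel f c true) := by
      apply chain_rev_append _ hP
      · intro x hx y hy
        simp at hx; subst hx
        exact htp y hy
      · apply zz_chain
        intro x hx y hy
        refine hTS x ?_ y (List.mem_of_mem_take hy)
        rcases List.mem_cons.1 hx with rfl | hx
        · exact ht
        · exact hsub x (List.mem_of_mem_take hx)
    have X2 : (z :: ((zz (t :: T1'.take k) (S2.take (k+1))).reverse ++ zz Q2 Q1)).IsChain
        (MRel f c true) := by
      rw [List.isChain_cons]
      refine ⟨?_, X⟩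
      apply head_append_of_ne
      · intro x hx
        rw [List.head?_reverse] at hx
        have := (zz_last _ _).1 (by simp; omega) x hx
        exact zS2 x (List.mem_of_mem_take this)
      · simp
    have X3 : ((zz (S1.take (k+1)) (T2.take (k+1))).reverse ++
        z :: ((zz (t :: T1'.take k) (S2.take (k+1))).reverse ++ zz Q2 Q1)).IsChain
        (MRel f c true) := by
      apply chain_rev_append _ X2
      · intro x hx y hy
        simp at hy; subst hy
        rw [zz_head] at hx
        exact (zS1 x (List.mem_of_mem_take (List.mem_of_mem_head? hx))).symm'
      · apply zz_chain
        intro x hx y hy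
        exact hST x (List.mem_of_mem_take hx) y (List.mem_of_mem_take hy)
    have Y : (zz (S1.drop (k+1)) (S2.drop (k+1)) ++ zz (T1'.drop k) (T2.drop (k+1))).IsChain
        (MRel f c false) := by
      have Y1 : (zz (S1.drop (k+1)) (S2.drop (k+1))).IsChain (MRel f c false) :=
        zz_chain _ _ (fun x hx y hy => hS x (List.mem_of_mem_drop hx) y (List.mem_of_mem_drop hy))
      have Y2 : (zz (T1'.drop k) (T2.drop (k+1))).IsChain (MRel f c false) :=
        zz_chain _ _ (fun x hx y hy => 
          hT x (hsub x (List.mem_of_mem_drop hx)) y (List.mem_of_mem_drop hy))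
      rcases le_total (S1.length - 1) T1'.length with h | h
      · rw [List.drop_eq_nil_of_le (as := S1) (by omega)]; simpa using Y2
      · rw [List.drop_eq_nil_of_le (as := T1') (by omega)]; simpa using Y1
    refine (good_join X3 Y (by simp) ?_).perm ?_
    · intro x hx y hy
      have hx1 : f x = 1 := by
        revert x
        apply head_append_of_ne
        · intro x hx
          rw [List.head?_reverse] at hx
          exact t2 x (List.mem_of_mem_take ((zz_last _ _).1 (by simp; omega) x hx))
        · intro h
          have := congrArg List.length h
          rw [List.length_reverse, zz_length _ _ (by simp; omega)] at this
          simp only [List.length_take, List.length_nil] at this; omega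
      have hy0 : f y = 0 := by
        revert y
        apply head_append_of_ne
        · intro y hy
          rw [zz_head] at hy
          exact s1 y (List.mem_of_mem_drop (List.mem_of_mem_head? hy))
        · intro _ y hy
          rw [zz_head] at hy
          exact t1 y (hsub y (List.mem_of_mem_drop (List.mem_of_mem_head? hy)))
      rw [hx1, hy0]; decide
    · rw [List.perm_iff_count]
      intro a
      have e1 := hp.count_eq a
      have e2 : (T1'.take k).count a + (T1'.drop k).count a = T1'.count a := by
        rw [← List.count_append, List.take_append_drop]
      have e3 : (S2.take (k+1)).count a + (S2.drop (k+1)).count a = S2.count a := by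
        rw [← List.count_append, List.take_append_drop]
      have e4 : (S1.take (k+1)).count a + (S1.drop (k+1)).count a = S1.count a := by
        rw [← List.count_append, List.take_append_drop]
      have e5 : (T2.take (k+1)).count a + (T2.drop (k+1)).count a = T2.count a := by
        rw [← List.count_append, List.take_append_drop]
      have f1 := zz_count a (S1.take (k+1)) (T2.take (k+1)) (by simp; omega)
      have f2 := zz_count a (t :: T1'.take k) (S2.take (k+1)) (by simp; omega)
      have f3 := zz_count a (S1.drop (k+1)) (S2.drop (k+1)) (by simp; omega)
      have f4 := zz_count a (T1'.drop k) (T2.drop (k+1)) (by simp; omega)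
      simp only [List.count_append, List.count_cons, List.count_reverse] at *
      omega
  -- the first vertex of the red path is blue to all of `S1` and `T1`
  apply Good.insert
  · cases Q2 with
    | nil =>
      exfalso
      apply ha
      exact ⟨S1[0], by simp, by simp⟩
    | cons p Q2 =>
      have key : ∀ x, f x = 0 → ¬ (∀ p' ∈ (zz (p :: Q2) Q1).head?, MRel f c true x p') →
          MRel f c false p x := by
        intro x hx hn
        have hpx : f x ≠ f p := by rw [hx, q2 p (by simp)]; decide
        apply MRel.symm'
        refine ⟨hpx, ?_⟩
        by_contra hcon
        apply hn
        intro p' hp'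
        simp at hp'; subst hp'
        exact ⟨hpx, by simpa using hcon⟩
      have pS : ∀ x ∈ S1, MRel f c false p x := fun x hx =>
        key x (s1 x hx) (fun h => ha ⟨x, hx, h⟩)
      have pT : ∀ x ∈ T1, MRel f c false p x := fun x hx =>
        key x (t1 x hx) (fun h => hb ⟨x, hx, h⟩)
      rw [zz_cons] at hP
      have B1 : (p :: zz T1 T2).IsChain (MRel f c false) := by
        rw [List.isChain_cons]
        refine ⟨?_, zz_chain _ _ hT⟩
        intro y hy
        rw [zz_head] at hy
        exact pT y (List.mem_of_mem_head? hy)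
      have B2 : ((zz S1 S2).reverse ++ p :: zz T1 T2).IsChain (MRel f c false) := by
        apply chain_rev_append (zz_chain _ _ hS) B1
        intro x hx y hy
        simp at hy; subst hy
        rw [zz_head] at hx
        exact (pS x (List.mem_of_mem_head? hx)).symm'
      refine (good_join hP.tail B2 (by simp) ?_).perm ?_
      · intro x hx y hy
        simp only [List.tail_cons, zz_head] at hx
        have hx0 := q1 x (List.mem_of_mem_head? hx)
        have hy1 : f y = 1 := by
          revert y
          apply head_append_of_ne
          · intro y hy
            rw [List.head?_reverse] at hy
            exact s2 y ((zz_last _ _).1 lS y hy)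
          · intro h
            have := congrArg List.length h
            rw [List.length_reverse, zz_length _ _ (Or.inl lS)] at this
            simp only [List.length_take, List.length_nil] at this; omega
        rw [hx0, hy1]; decide
      · rw [List.perm_iff_count]
        intro a
        have f1 := zz_count a S1 S2 (Or.inl lS)
        have f2 := zz_count a T1 T2 (Or.inl lT)
        simp only [zz_cons, List.tail_cons, List.count_append, List.count_cons,
          List.count_reverse] at *
        omega
  · intro a ha
    have hQ : ∀ a ∈ zz Q2 Q1, f a ≠ 2 := by
      intro a ha
      have h1 := List.count_pos_iff.2 ha
      rw [zz_count _ _ _ (Or.inl lQ.symm)] at h1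
      rcases Nat.lt_or_ge 0 (Q2.count a) with h | h
      · rw [q2 a (List.count_pos_iff.1 h)]; decide
      · rw [q1 a (List.count_pos_iff.1 (by omega))]; decide
    rw [hz]
    simp only [List.mem_append] at ha
    rcases ha with (ha | ha | ha) | ha | ha
    · exact (hQ a ha).symm
    · rw [s1 a ha]; decide
    · rw [s2 a ha]; decide
    · rw [t1 a ha]; decide
    · rw [t2 a ha]; decide

lemma zz_ne_two {V : Type*} {f : V → Fin 3} {Q1 Q2 : List V} (lQ : Q1.length = Q2.length)
    (q1 : ∀ a ∈ Q1, f a = 0) (q2 : ∀ a ∈ Q2, f a = 1) : ∀ a ∈ zz Q2 Q1, f a ≠ 2 := by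
  classical
  intro a ha
  have h1 := List.count_pos_iff.2 ha
  rw [zz_count _ _ _ (Or.inl lQ.symm)] at h1
  rcases Nat.lt_or_ge 0 (Q2.count a) with h | h
  · rw [q2 a (List.count_pos_iff.1 h)]; decide
  · rw [q1 a (List.count_pos_iff.1 (by omega))]; decide

lemma core {V : Type*} {f : V → Fin 3} {c : Sym2 V → Bool} {z : V}
    {Q1 Q2 S1 S2 T1 T2 : List V} (hz : f z = 2)
    (lQ : Q1.length = Q2.length) (lS : S1.length = S2.length) (lT : T1.length = T2.length)
    (q1 : ∀ a ∈ Q1, f a = 0) (q2 : ∀ a ∈ Q2, f a = 1)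
    (s1 : ∀ a ∈ S1, f a = 0) (s2 : ∀ a ∈ S2, f a = 1)
    (t1 : ∀ a ∈ T1, f a = 0) (t2 : ∀ a ∈ T2, f a = 1)
    (hP : (zz Q2 Q1).IsChain (MRel f c true))
    (hS : ∀ x ∈ S1, ∀ y ∈ S2, MRel f c false x y)
    (hT : ∀ x ∈ T1, ∀ y ∈ T2, MRel f c false x y)
    (hne : zz Q2 Q1 ++ (S1 ++ S2) ++ (T1 ++ T2) ≠ []) :
    Good f c (z :: (zz Q2 Q1 ++ (S1 ++ S2) ++ (T1 ++ T2))) := by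
  classical
  have hQ := zz_ne_two lQ q1 q2
  have hSn : ∀ a ∈ S1 ++ S2, f a ≠ 2 := by
    intro a ha
    rcases List.mem_append.1 ha with ha | ha
    · rw [s1 a ha]; decide
    · rw [s2 a ha]; decide
  have hTn : ∀ a ∈ T1 ++ T2, f a ≠ 2 := by
    intro a ha
    rcases List.mem_append.1 ha with ha | ha
    · rw [t1 a ha]; decide
    · rw [t2 a ha]; decide
  have hall : ∀ a ∈ zz Q2 Q1 ++ (S1 ++ S2) ++ (T1 ++ T2), f z ≠ f a := by
    intro a ha
    rw [hz]
    rcases List.mem_append.1 ha with ha | ha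
    · rcases List.mem_append.1 ha with ha | ha
      · exact (hQ a ha).symm
      · exact (hSn a ha).symm
    · exact (hTn a ha).symm
  -- a blue path covering everything outside the red path suffices
  have fin : ∀ B : List V, B.IsChain (MRel f c false) → B.Perm ((S1 ++ S2) ++ (T1 ++ T2)) →
      Good f c (z :: (zz Q2 Q1 ++ (S1 ++ S2) ++ (T1 ++ T2))) := by
    intro B hB hp
    apply Good.insert _ hall
    have : Good f c (zz Q2 Q1 ++ B) := by
      by_cases hBn : B = []
      · subst hBn
        have hp' := List.nil_perm.1 hp
        refine good_join hP (by simp) ?_ (by simp)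
        intro h
        apply hne
        rw [List.append_assoc, hp']
        exact h
      · apply good_P lQ q1 q2 hP hB hBn
        intro y hy
        rcases List.mem_append.1 (hp.subset (List.mem_of_mem_head? hy)) with ha | ha
        · exact hSn y ha
        · exact hTn y ha
    refine this.perm ?_
    rw [List.append_assoc]
    exact hp.append_left _
  have zzp : ∀ A B : List V, A.length = B.length → (zz A B).Perm (A ++ B) := by
    intro A B h
    rw [List.perm_iff_count]
    intro a
    rw [zz_count _ _ _ (Or.inl h), List.count_append]
  have fin2 : ∀ l m : List V, l.IsChain (MRel f c false) → m.IsChain (MRel f c false) →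
      l.Perm (S1 ++ S2) → m.Perm (T1 ++ T2) → 
      (∀ x ∈ l.head?, ∀ y ∈ m.head?, MRel f c false x y) →
      Good f c (z :: (zz Q2 Q1 ++ (S1 ++ S2) ++ (T1 ++ T2))) := by
    intro l m hl hm pl pm h
    exact fin _ (chain_rev_append hl hm h) (((List.reverse_perm _).trans pl).append pm)
  rcases Nat.eq_zero_or_pos S1.length with nS | nS
  · have e1 := List.eq_nil_of_length_eq_zero nS
    apply fin2 (zz S1 S2) (zz T1 T2) (zz_chain _ _ hS) (zz_chain _ _ hT) (zzp _ _ lS) (zzp _ _ lT)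
    simp [e1]
  rcases Nat.eq_zero_or_pos T1.length with nT | nT
  · have e1 := List.eq_nil_of_length_eq_zero nT
    apply fin2 (zz S1 S2) (zz T1 T2) (zz_chain _ _ hS) (zz_chain _ _ hT) (zzp _ _ lS) (zzp _ _ lT)
    simp [e1]
  by_cases hb : ∃ x ∈ S1 ++ S2, ∃ y ∈ T1 ++ T2, MRel f c false x y
  · obtain ⟨x, hx, y, hy, hxy⟩ := hb
    obtain ⟨l, l1, l2, l3⟩ := bip_path lS hS x hx
    obtain ⟨m, m1, m2, m3⟩ := bip_path lT hT y hy
    apply fin2 l m l1 m1 l2 m2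
    rw [l3, m3]
    simpa using hxy
  have red : ∀ x ∈ S1 ++ S2, ∀ y ∈ T1 ++ T2, f x ≠ f y → MRel f c true x y := by
    intro x hx y hy h
    refine ⟨h, ?_⟩
    by_contra hcon
    exact hb ⟨x, hx, y, hy, h, by simpa using hcon⟩
  have hST : ∀ x ∈ S1, ∀ y ∈ T2, MRel f c true x y := by
    intro x hx y hy
    refine red x (by simp [hx]) y (by simp [hy]) ?_
    rw [s1 x hx, t2 y hy]; decide
  have hTS : ∀ x ∈ T1, ∀ y ∈ S2, MRel f c true x y := by
    intro x hx y hy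
    refine (red y (by simp [hy]) x (by simp [hx]) ?_).symm'
    rw [s2 y hy, t1 x hx]; decide
  by_cases hzS : ∀ x ∈ S1 ++ S2, MRel f c true z x
  · exact core4 hz lQ lS lT q1 q2 s1 s2 t1 t2 hP hS hT nS nT hST hTS hzS
  by_cases hzT : ∀ x ∈ T1 ++ T2, MRel f c true z x
  · refine (core4 hz lQ lT lS q1 q2 t1 t2 s1 s2 hP hT hS nT nS hTS hST hzT).perm ?_
    rw [List.append_assoc (zz Q2 Q1), List.append_assoc (zz Q2 Q1)]
    exact (List.perm_append_comm.append_left _).cons _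
  push Not at hzS hzT
  obtain ⟨x, hx, hzx⟩ := hzS
  obtain ⟨y, hy, hzy⟩ := hzT
  have bl : ∀ w, f w ≠ 2 → ¬ MRel f c true z w → MRel f c false z w := by
    intro w hw h
    have h1 : f z ≠ f w := by rw [hz]; exact hw.symm
    refine ⟨h1, ?_⟩
    by_contra hcon
    exact h ⟨h1, by simpa using hcon⟩
  have zx := bl x (hSn x hx) hzx
  have zy := bl y (hTn y hy) hzy
  obtain ⟨l, l1, l2, l3⟩ := bip_path lS hS x hx
  obtain ⟨m, m1, m2, m3⟩ := bip_path lT hT y hy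
  have B : (l.reverse ++ z :: m).IsChain (MRel f c false) := by
    apply chain_rev_append l1
    · rw [List.isChain_cons, m3]
      exact ⟨by simpa using zy, m1⟩
    · rw [l3]; simpa using zx.symm'
  refine (good_P lQ q1 q2 hP B (by simp) ?_).perm ?_
  · apply head_append_of_ne
    · intro w hw
      exact hSn w (l2.subset (by simpa using List.mem_of_mem_head? hw))
    · intro h
      simp at h
      simp [h] at l3
  · have h1 := (List.reverse_perm l).trans l2
    rw [List.perm_iff_count] at h1 m2 ⊢
    intro a
    have := h1 a
    have := m2 a
    simp only [List.count_append, List.count_cons] at *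
    omega

lemma good_all {V : Type*} [Fintype V]
    (f : V → Fin 3) (hf : Function.Surjective f) (c : Sym2 V → Bool)
    (h12 : ({w | f w = 0} : Set V).ncard = ({w | f w = 1} : Set V).ncard)
    (h3 : ({w | f w = 2} : Set V).ncard = 1) :
    Good f c (Finset.univ : Finset V).toList := by
  classical
  obtain ⟨z, hz⟩ := Set.ncard_eq_one.1 h3
  have hz' : ∀ w, f w = 2 ↔ w = z := fun w => by
    have := Set.ext_iff.1 hz w
    simpa using this
  have fz : f z = 2 := (hz' z).2 rfl
  set U : List V := (Finset.univ.filter (fun w => f w ≠ 2)).toList with hU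
  have memU : ∀ w, w ∈ U ↔ f w ≠ 2 := by simp [hU]
  have ndU : U.Nodup := Finset.nodup_toList _
  have hperm : (z :: U).Perm (Finset.univ : Finset V).toList := by
    rw [List.perm_ext_iff_of_nodup _ (Finset.nodup_toList _)]
    · intro a
      simp [memU, hz']
      tauto
    · rw [List.nodup_cons]
      exact ⟨by simp [memU, fz], ndU⟩
  -- class sizes as list counts
  let cl : Fin 3 → List V → ℕ := fun i l => l.countP (fun w => f w = i)
  have cU : ∀ i : Fin 3, i ≠ 2 → cl i U = ({w | f w = i} : Set V).ncard := by
    intro i hi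
    have e : ({w | f w = i} : Set V) = ((U.filter (fun w => f w = i)).toFinset : Set V) := by
      ext w
      simp [memU]
      rintro rfl; exact hi
    rw [e, Set.ncard_coe_finset, List.toFinset_card_of_nodup (ndU.filter _)]
    exact List.countP_eq_length_filter
  have c01 : cl 0 U = cl 1 U := by rw [cU 0 (by decide), cU 1 (by decide), h12]
  have lenU : ∀ l : List V, (∀ w ∈ l, f w ≠ 2) → l.length = cl 0 l + cl 1 l := by
    intro l
    induction l with
    | nil => simp [cl]
    | cons a l ih =>
      intro h
      have h1 := ih (fun w hw => h w (by simp [hw]))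
      have h2 := h a (by simp)
      have h3 : f a = 0 ∨ f a = 1 := by omega
      simp only [cl, List.countP_cons, List.length_cons] at h1 ⊢
      rcases h3 with h3 | h3 <;> simp [h3] <;> omega
  obtain ⟨P, A, B, pU, hl, hP, hAB⟩ := dfs f c U U.length le_rfl
  have hAB' : B.length = A.length := by omega
  have sub : ∀ w ∈ P ++ A ++ B, f w ≠ 2 := fun w hw => (memU w).1 (pU.subset hw)
  have subP : ∀ w ∈ P, f w ≠ 2 := fun w hw => sub w (by simp [hw])
  have subA : ∀ w ∈ A, f w ≠ 2 := fun w hw => sub w (by simp [hw])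
  have subB : ∀ w ∈ B, f w ≠ 2 := fun w hw => sub w (by simp [hw])
  have lP := lenU P subP
  have lA := lenU A subA
  have lB := lenU B subB
  have lU := lenU U (fun w hw => (memU w).1 hw)
  have cnt : ∀ i, cl i P + cl i A + cl i B = cl i U := by
    intro i
    have := pU.countP_eq (fun w => decide (f w = i))
    simpa [cl, List.countP_append, Nat.add_assoc] using this
  have cnt0 := cnt 0
  have cnt1 := cnt 1
  -- normal form of the red path
  have PQ : ∃ Q1 Q2 : List V, Q1.length = Q2.length ∧ (∀ a ∈ Q1, f a = 0) ∧ 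
      (∀ a ∈ Q2, f a = 1) ∧ (zz Q2 Q1).IsChain (MRel f c true) ∧ (zz Q2 Q1).Perm P := by
    have alt : P.IsChain (fun x y => f x ≠ f y) := hP.imp (fun _ _ h => h.1)
    have h01 : ∀ a ∈ P, f a = 0 ∨ f a = 1 := fun a ha => by have := subP a ha; omega
    have evenP : P.length % 2 = 0 := by
      have := pU.length_eq
      simp only [List.length_append] at this
      omega
    by_cases hh : ∀ a ∈ P.head?, f a = 1
    · obtain ⟨Q2, Q1, e, h2, h1, hlen⟩ := zz_of_alt f P alt 1 0 (fun a ha => (h01 a ha).symm) hh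
      have := zz_length _ _ hlen
      rw [← e] at this
      exact ⟨Q1, Q2, by omega, h1, h2, e ▸ hP, e ▸ List.Perm.refl _⟩
    · have hh' : ∀ a ∈ P.head?, f a = 0 := by
        push Not at hh
        obtain ⟨b, hb, hb'⟩ := hh
        intro a ha
        have : a = b := Option.mem_unique ha hb
        subst this
        exact (h01 a (List.mem_of_mem_head? ha)).resolve_right hb'
      obtain ⟨Q1, Q2, e, h1, h2, hlen⟩ := zz_of_alt f P alt 0 1 h01 hh'
      have hlen' := zz_length _ _ hlen
      rw [← e] at hlen'
      have hle : Q1.length = Q2.length := by omega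
      -- the reversed path
      have revalt : P.reverse.IsChain (fun x y => f x ≠ f y) :=
        (MRel.chain_reverse hP).imp (fun _ _ h => h.1)
      obtain ⟨R2, R1, e', r2, r1, hlen2⟩ := zz_of_alt f P.reverse revalt 1 0
        (fun a ha => (h01 a (by simpa using ha)).symm) (by
          intro a ha
          rw [List.head?_reverse, e] at ha
          exact h2 a ((zz_last _ _).1 hle a ha))
      have := zz_length _ _ hlen2
      rw [← e', List.length_reverse] at this
      exact ⟨R1, R2, by omega, r1, r2, e' ▸ MRel.chain_reverse hP, e' ▸ List.reverse_perm _⟩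
  obtain ⟨Q1, Q2, lQ, q1, q2, hQ, pQ⟩ := PQ
  have clP : ∀ i, cl i P = cl i Q2 + cl i Q1 := by
    intro i
    have h1 : (zz Q2 Q1).Perm (Q2 ++ Q1) := by
      rw [List.perm_iff_count]
      intro a
      rw [zz_count _ _ _ (Or.inl lQ.symm), List.count_append]
    have := (pQ.symm.trans h1).countP_eq (fun w => decide (f w = i))
    simpa [cl, List.countP_append] using this
  have a1 : cl 0 Q1 = Q1.length := List.countP_eq_length.2 (by simpa using q1)
  have a2 : cl 1 Q2 = Q2.length := List.countP_eq_length.2 (by simpa using q2)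
  have a3 : cl 1 Q1 = 0 := List.countP_eq_zero.2 (fun a ha => by simp [q1 a ha])
  have a4 : cl 0 Q2 = 0 := List.countP_eq_zero.2 (fun a ha => by simp [q2 a ha])
  have p0 := clP 0
  have p1 := clP 1
  let F : Fin 3 → List V → List V := fun i l => l.filter (fun w => f w = i)
  have lF : ∀ i l, (F i l).length = cl i l := fun i l => List.countP_eq_length_filter.symm
  have fF : ∀ i l, ∀ a ∈ F i l, f a = i := by
    intro i l a ha
    simpa using (List.mem_filter.1 ha).2
  have mF : ∀ i l, ∀ a ∈ F i l, a ∈ l := fun i l a ha => (List.mem_filter.1 ha).1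
  have pF : ∀ l : List V, (∀ w ∈ l, f w ≠ 2) → (F 0 l ++ F 1 l).Perm l := by
    intro l hl
    have h1 : F 1 l = l.filter (fun w => !decide (f w = 0)) := by
      apply List.filter_congr
      intro a ha
      have := hl a ha
      have : f a = 0 ∨ f a = 1 := by omega
      rcases this with h | h <;> simp [h]
    rw [h1]
    exact List.filter_append_perm _ _
  have blue : ∀ a ∈ A, ∀ b ∈ B, f a ≠ f b → MRel f c false a b := by
    intro a ha b hb h
    refine ⟨h, ?_⟩
    by_contra hcon
    exact hAB a ha b hb ⟨h, by simpa using hcon⟩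
  have total : (zz Q2 Q1 ++ (F 0 A ++ F 1 B) ++ (F 0 B ++ F 1 A)).Perm U := by
    refine List.Perm.trans ?_ pU
    have hA := pF A subA
    have hB := pF B subB
    rw [List.perm_iff_count] at hA hB pQ ⊢
    intro a
    have := hA a
    have := hB a
    have := pQ a
    simp only [List.count_append] at *
    omega
  refine Good.perm ?_ ((total.cons z).trans hperm)
  apply core fz lQ (by rw [lF, lF]; omega) (by rw [lF, lF]; omega) q1 q2 (fF 0 A) (fF 1 B)
    (fF 0 B) (fF 1 A) hQ
  · intro x hx y hy
    apply blue x (mF _ _ x hx) y (mF _ _ y hy)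
    rw [fF _ _ x hx, fF _ _ y hy]; decide
  · intro x hx y hy
    apply MRel.symm'
    apply blue y (mF _ _ y hy) x (mF _ _ x hx)
    rw [fF _ _ x hx, fF _ _ y hy]; decide
  · intro h
    rw [h] at total
    obtain ⟨w, hw⟩ := hf 0
    have : w ∈ U := (memU w).2 (by rw [hw]; decide)
    rw [List.nil_perm.1 total] at this
    simp at this

end Helpers

/-- Lemma 2.4: if in a red/blue-coloured complete tripartite graph with classes
`V₁, V₂, V₃` of sizes `n₁, n₂, n₃` one has `n₁ = n₂` and `n₃ = 1`, then the graph can be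
partitioned into a red path and a blue path sharing exactly one vertex, a common
endvertex. -/
theorem stmt8 {V : Type*} [Fintype V]
    (f : V → Fin 3) (hf : Function.Surjective f)
    (G : SimpleGraph V) (hG : ∀ x y, G.Adj x y ↔ f x ≠ f y)
    (c : Sym2 V → Bool)
    (h12 : ({w | f w = 0} : Set V).ncard = ({w | f w = 1} : Set V).ncard)
    (h3 : ({w | f w = 2} : Set V).ncard = 1) :
    ∃ (x u v : V) (R : G.Walk u x) (B : G.Walk v x),
      R.IsPath ∧ (∀ e ∈ R.edges, c e = true) ∧
      B.IsPath ∧ (∀ e ∈ B.edges, c e = false) ∧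
      {y | y ∈ R.support} ∩ {y | y ∈ B.support} = {x} ∧
      {y | y ∈ R.support} ∪ {y | y ∈ B.support} = Set.univ := by
  classical
  obtain ⟨x, R, B, hR, hB, hp⟩ := good_all f hf c h12 h3
  obtain ⟨u, p, p1, p2⟩ := walk_of_chain G hG R x hR
  obtain ⟨v, q, q1, q2⟩ := walk_of_chain G hG B x hB
  have nd : (x :: (R ++ B)).Nodup := hp.nodup_iff.2 (Finset.nodup_toList _)
  rw [List.nodup_cons, List.nodup_append] at nd
  obtain ⟨hx, hRn, hBn, hd⟩ := nd
  simp only [List.mem_append, not_or] at hx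
  refine ⟨x, u, v, p.reverse, q.reverse, ?_, ?_, ?_, ?_, ?_, ?_⟩
  · rw [Walk.isPath_reverse_iff, Walk.isPath_def, p1, List.nodup_cons]
    exact ⟨hx.1, hRn⟩
  · intro e he
    exact p2 e (by simpa using he)
  · rw [Walk.isPath_reverse_iff, Walk.isPath_def, q1, List.nodup_cons]
    exact ⟨hx.2, hBn⟩
  · intro e he
    exact q2 e (by simpa using he)
  · ext y
    simp only [Walk.support_reverse, p1, q1, List.mem_reverse, List.mem_cons, Set.mem_inter_iff,
      Set.mem_setOf_eq, Set.mem_singleton_iff]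
    constructor
    · rintro ⟨h | h, h' | h'⟩
      · exact h
      · exact h
      · exact h'
      · exact absurd rfl (hd y h y h')
    · intro h
      exact ⟨Or.inl h, Or.inl h⟩
  · ext y
    have : y ∈ x :: (R ++ B) := hp.symm.subset (by simp)
    simp only [List.mem_cons, List.mem_append] at this
    simp only [Walk.support_reverse, p1, q1, List.mem_reverse, List.mem_cons, Set.mem_union,
      Set.mem_setOf_eq, Set.mem_univ, iff_true]
    tauto
end

section
/- Let G be a complete tripartite graph with partition classes V₁, V₂, V₃ of sizes n₁, n₂, n₃, and suppose nᵢ ≤ n₍₃₋ᵢ₎ + n₃ − 1 for some i ∈ {1,2}. Let P be any Hamilton path of G (a path visiting every vertex of G exactly once). Then either P contains an edge with one endpoint in V₍₃₋ᵢ₎ and the other in V₃, or nᵢ = n₍₃₋ᵢ₎ + n₃ − 1 and both endvertices of P lie in V₍₃₋ᵢ₎ ∪ V₃. -/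
open SimpleGraph Set

theorem alt_count {V : Type*} (f : V → Fin 3) (G : SimpleGraph V) (i : Fin 3)
    (u v : V) (P : G.Walk u v)
    (h : ∀ a b : V, s(a, b) ∈ P.edges → (f a = i ↔ f b ≠ i)) :
    P.support.countP (fun w => decide (f w ≠ i)) + (if f u = i then 1 else 0)
      + (if f v = i then 1 else 0) = P.support.countP (fun w => decide (f w = i)) + 1 := by
  induction P with
  | nil => 
    rename_i x
    by_cases hx : f x = i <;> simp [hx]
  | @cons x y z hxy p ih =>
    have h1 := h x y (by simp)
    have h2 := ih (fun a b hab => h a b (by simp [hab]))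
    rw [SimpleGraph.Walk.support_cons, List.countP_cons, List.countP_cons]
    by_cases hx : f x = i <;> by_cases hy : f y = i <;> simp_all <;> omega

theorem ncard_eq_countP {V : Type*} [Fintype V] (l : List V) (hl : l.Nodup) (hm : ∀ x, x ∈ l)
    (p : V → Prop) [DecidablePred p] :
    ({w | p w} : Set V).ncard = l.countP (fun w => decide (p w)) := by
  classical
  have : ({w | p w} : Set V) = ((l.filter (fun w => decide (p w))).toFinset : Set V) := by
    ext x; simp [hm]
  rw [this, Set.ncard_coe_finset, List.toFinset_card_of_nodup (hl.filter _),
    List.countP_eq_length_filter]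

/-- Lemma 2.5: let `G` be a complete tripartite graph with classes `V₁, V₂, V₃` (fibres of
`f` over `0, 1, 2`) of sizes `n₁, n₂, n₃`, and suppose `nᵢ ≤ n₍₃₋ᵢ₎ + n₃ − 1` for some
`i ∈ {1,2}` (here `i, i'` with `{i, i'} = {0, 1}`). Then any Hamilton path `P` of `G`
either contains an edge between `V₍₃₋ᵢ₎` and `V₃`, or `nᵢ = n₍₃₋ᵢ₎ + n₃ − 1` and both
endvertices of `P` lie in `V₍₃₋ᵢ₎ ∪ V₃`. -/
theorem stmt9 {V : Type*} [Fintype V]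
    (f : V → Fin 3) (hf : Function.Surjective f)
    (G : SimpleGraph V) (hG : ∀ x y, G.Adj x y ↔ f x ≠ f y)
    (i i' : Fin 3) (hii' : (i = 0 ∧ i' = 1) ∨ (i = 1 ∧ i' = 0))
    (hle : ({w | f w = i} : Set V).ncard + 1 ≤
      ({w | f w = i'} : Set V).ncard + ({w | f w = 2} : Set V).ncard)
    (u v : V) (P : G.Walk u v) (hP : P.IsPath) (hham : ∀ x : V, x ∈ P.support) :
    (∃ a b : V, s(a, b) ∈ P.edges ∧ f a = i' ∧ f b = 2) ∨
    (({w | f w = i} : Set V).ncard + 1 =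
        ({w | f w = i'} : Set V).ncard + ({w | f w = 2} : Set V).ncard ∧
      (f u = i' ∨ f u = 2) ∧ (f v = i' ∨ f v = 2)) := by
  by_cases hE : ∃ a b : V, s(a, b) ∈ P.edges ∧ f a = i' ∧ f b = 2
  · exact Or.inl hE
  right
  have key : ∀ j : Fin 3, j = i ∨ j = i' ∨ j = 2 := by
    rcases hii' with ⟨rfl, rfl⟩ | ⟨rfl, rfl⟩ <;> decide
  have hi' : i' ≠ i := by rcases hii' with ⟨rfl, rfl⟩ | ⟨rfl, rfl⟩ <;> decide
  have hi2 : (2 : Fin 3) ≠ i := by rcases hii' with ⟨rfl, rfl⟩ | ⟨rfl, rfl⟩ <;> decide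
  have hi'2 : i' ≠ 2 := by rcases hii' with ⟨rfl, rfl⟩ | ⟨rfl, rfl⟩ <;> decide
  have halt : ∀ a b : V, s(a, b) ∈ P.edges → (f a = i ↔ f b ≠ i) := by
    intro a b hab
    have hne : f a ≠ f b := (hG a b).1 (P.adj_of_mem_edges hab)
    constructor
    · intro ha hb
      exact hne (ha.trans hb.symm)
    · intro hb
      by_contra ha
      have hb' := (key (f b)).resolve_left hb
      have ha' := (key (f a)).resolve_left ha
      rcases ha' with ha' | ha' <;> rcases hb' with hb' | hb'
      · exact hne (ha'.trans hb'.symm)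
      · exact hE ⟨a, b, hab, ha', hb'⟩
      · exact hE ⟨b, a, by rwa [Sym2.eq_swap], hb', ha'⟩
      · exact hne (ha'.trans hb'.symm)
  have hc := alt_count f G i u v P halt
  rw [← ncard_eq_countP P.support hP.support_nodup hham (fun w => f w ≠ i),
    ← ncard_eq_countP P.support hP.support_nodup hham (fun w => f w = i)] at hc
  have hun : ({w | f w ≠ i} : Set V) = {w | f w = i'} ∪ {w | f w = 2} := by
    ext w
    simp only [Set.mem_setOf_eq, Set.mem_union]
    constructor
    · exact fun h => (key (f w)).resolve_left h
    · rintro (h | h) <;> rw [h] <;> assumption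
  have hdis : Disjoint ({w | f w = i'} : Set V) {w | f w = 2} := by
    rw [Set.disjoint_left]
    intro w h1 h2
    exact hi'2 (h1.symm.trans h2)
  rw [hun, Set.ncard_union_eq hdis (Set.toFinite _) (Set.toFinite _)] at hc
  have hu : f u ≠ i := by
    intro h
    rw [if_pos h] at hc
    omega
  have hv : f v ≠ i := by
    intro h
    rw [if_pos h] at hc
    omega
  rw [if_neg hu, if_neg hv] at hc
  exact ⟨by omega, (key _).resolve_left hu, (key _).resolve_left hv⟩
end

section
/- Let G be a fair complete tripartite graph on an even number of vertices whose edges are coloured red and blue. Then there exist a red connected matching and a blue connected matching which are vertex-disjoint and together cover all vertices of G (either matching may be empty). -/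
open SimpleGraph Set

lemma exists_ffinv {V : Type*} [Fintype V] (he : Even (Fintype.card V)) :
    ∃ σ : V → V, (∀ v, σ (σ v) = v) ∧ ∀ v, v ≠ σ v := by
  obtain ⟨m, hm⟩ := he
  have e : V ≃ Fin m × Bool := Fintype.equivOfCardEq (by simp; omega)
  refine ⟨fun v => e.symm ((e v).1, !(e v).2), fun v => by simp, fun v h => ?_⟩
  have h2 := congrArg (fun w => (e w).2) h
  simp at h2

lemma swap_lemma {V : Type*} [Fintype V] (H K : V → V → Prop)
    (hHirr : ∀ x, ¬ H x x) (hKs : ∀ x y, K x y → K y x) (hKH : ∀ x y, K x y → H x y)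
    (hsw : ∀ x y, H x y → ¬ K x y → ∃ S : Finset V, x ∈ S ∧ y ∈ S ∧
      2 * S.card ≤ Fintype.card V ∧ ∀ u v, u ∉ S → v ∉ S → H u v →
        (K x u ∧ K y v) ∨ (K x v ∧ K y u)) :
    ∀ (n : ℕ) (σ : V → V), (∀ v, σ (σ v) = v) → (∀ v, H v (σ v)) →
      ({v | ¬ K v (σ v)} : Set V).ncard ≤ n →
      ∃ τ : V → V, (∀ v, τ (τ v) = v) ∧ ∀ v, K v (τ v) := by
  classical
  intro n
  induction n with
  | zero =>
    intro σ h1 h2 h3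
    refine ⟨σ, h1, fun v => ?_⟩
    have h4 : ({v | ¬ K v (σ v)} : Set V) = ∅ := by
      rw [← Set.ncard_eq_zero (Set.toFinite _)]; omega
    by_contra hv
    have : v ∈ ({v | ¬ K v (σ v)} : Set V) := hv
    rw [h4] at this
    exact this
  | succ n ih =>
    intro σ h1 h2 h3
    by_cases hall : ∀ v, K v (σ v)
    · exact ⟨σ, h1, hall⟩
    push Not at hall
    obtain ⟨x, hx⟩ := hall
    obtain ⟨S, hxS, hyS, hS, hsw⟩ := hsw x (σ x) (h2 x) hx
    have hu : ∃ u, u ∉ S ∧ σ u ∉ S := by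
      by_contra hcon
      push Not at hcon
      have hle : (Sᶜ).card ≤ (S.erase x).card := by
        apply Finset.card_le_card_of_injOn σ
        · intro u hu
          have hu : u ∉ S := by simpa using hu
          have := hcon u hu
          simp only [Finset.coe_erase, Set.mem_sdiff, Finset.mem_coe, Set.mem_singleton_iff]
          refine ⟨this, fun h => hu ?_⟩
          rw [← h1 u, h]; exact hyS
        · intro a _ b _ hab
          rw [← h1 a, hab, h1]
      rw [Finset.card_compl, Finset.card_erase_of_mem hxS] at hle
      have : 0 < S.card := Finset.card_pos.2 ⟨x, hxS⟩
      have := Finset.card_le_univ S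
      omega
    have key : ∃ u, u ∉ S ∧ σ u ∉ S ∧ K x u ∧ K (σ x) (σ u) := by
      obtain ⟨u, hu1, hu2⟩ := hu
      rcases hsw u (σ u) hu1 hu2 (h2 u) with h | h
      · exact ⟨u, hu1, hu2, h⟩
      · exact ⟨σ u, hu2, by rwa [h1], h.1, by rw [h1]; exact h.2⟩
    obtain ⟨u, hu1, hu2, hk1, hk2⟩ := key
    have hinj : ∀ a b, σ a = b → a = σ b := fun a b h => by rw [← h, h1]
    have hfx : ∀ v, σ v ≠ v := fun v h => hHirr v (by have := h2 v; rwa [h] at this)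
    obtain ⟨y, hy⟩ : ∃ y, y = σ x := ⟨_, rfl⟩
    obtain ⟨v, hv⟩ : ∃ v, v = σ u := ⟨_, rfl⟩
    have hσy : σ y = x := by rw [hy, h1]
    have hσv : σ v = u := by rw [hv, h1]
    rw [← hy] at hyS hk2 hx
    rw [← hv] at hu2 hk2
    have n1 : x ≠ y := fun h => hfx x (by rw [← hy, h])
    have n2 : u ≠ v := fun h => hfx u (by rw [← hv, h])
    have n3 : x ≠ u := fun h => hu1 (h ▸ hxS)
    have n4 : x ≠ v := fun h => hu2 (h ▸ hxS)
    have n5 : y ≠ u := fun h => hu1 (h ▸ hyS)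
    have n6 : y ≠ v := fun h => hu2 (h ▸ hyS)
    let τ : V → V := fun w => if w = x then u else if w = u then x else
      if w = y then v else if w = v then y else σ w
    have tx : τ x = u := by simp [τ]
    have tu : τ u = x := by simp [τ, n3.symm]
    have ty : τ y = v := by simp [τ, n1.symm, n5]
    have tv : τ v = y := by simp [τ, n4.symm, n2.symm, n6.symm]
    have tw : ∀ w, w ≠ x → w ≠ u → w ≠ y → w ≠ v → τ w = σ w := by
      intro w a b c d; simp [τ, a, b, c, d]
    have tK : ∀ w, K w (τ w) ∨ (w ≠ x ∧ τ w = σ w) := by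
      intro w
      by_cases a : w = x
      · left; rw [a, tx]; exact hk1
      by_cases b : w = u
      · left; rw [b, tu]; exact hKs _ _ hk1
      by_cases c : w = y
      · left; rw [c, ty]; exact hk2
      by_cases d : w = v
      · left; rw [d, tv]; exact hKs _ _ hk2
      right; exact ⟨a, tw w a b c d⟩
    apply ih τ
    · intro w
      by_cases a : w = x
      · rw [a, tx, tu]
      by_cases b : w = u
      · rw [b, tu, tx]
      by_cases c : w = y
      · rw [c, ty, tv]
      by_cases d : w = v
      · rw [d, tv, ty]
      rw [tw w a b c d, tw, h1]
      · intro h; exact c (by rw [hinj _ _ h, hy])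
      · intro h; exact d (by rw [hinj _ _ h, hv])
      · intro h; exact a (by rw [hinj _ _ h, hσy])
      · intro h; exact b (by rw [hinj _ _ h, hσv])
    · intro w
      rcases tK w with h | ⟨_, h⟩
      · exact hKH _ _ h
      · rw [h]; exact h2 w
    · have : ({v | ¬ K v (τ v)} : Set V).ncard < ({v | ¬ K v (σ v)} : Set V).ncard := by
        apply Set.ncard_lt_ncard _ (Set.toFinite _)
        refine ⟨fun w hw => ?_, fun hsub => ?_⟩
        · rcases tK w with h | ⟨_, h⟩
          · exact absurd h hw
          · simp only [Set.mem_ofPred_eq] at hw ⊢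
            rwa [← h]
        · have hxm : x ∈ ({v | ¬ K v (σ v)} : Set V) := by
            simp only [Set.mem_ofPred_eq]; rwa [← hy]
          have := hsub hxm
          simp only [Set.mem_ofPred_eq, tx] at this
          exact this hk1
      omega

lemma mono_adj {V : Type*} (G : SimpleGraph V) (c : Sym2 V → Bool) (b : Bool) (x y : V) :
    (monoSubgraph G c b).Adj x y ↔ G.Adj x y ∧ c s(x, y) = b := by
  simp only [monoSubgraph, SimpleGraph.fromEdgeSet_adj, Set.mem_ofPred_eq,
    SimpleGraph.mem_edgeSet]
  constructor
  · exact fun h => h.1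
  · exact fun h => ⟨h, h.1.ne⟩

/-- All edges of colour `b` lie in one component. -/
def OneComp {V : Type*} (G : SimpleGraph V) (c : Sym2 V → Bool) (b : Bool) : Prop :=
  ∀ x y u v, (monoSubgraph G c b).Adj x y → (monoSubgraph G c b).Adj u v →
    (monoSubgraph G c b).Reachable x u

lemma oneComp_or {V : Type*} (f : V → Fin 3) (hf : Function.Surjective f)
    (G : SimpleGraph V) (hG : ∀ x y, G.Adj x y ↔ f x ≠ f y) (c : Sym2 V → Bool) (b : Bool)
    (hn : ¬ OneComp G c b) : OneComp G c (!b) := by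
  unfold OneComp at hn
  push Not at hn
  obtain ⟨x, y, u, v, hxy, huv, hxu⟩ := hn
  have hyx := hxy.reachable
  have huv' := huv.reachable
  have fxy : f x ≠ f y := (hG _ _).1 ((mono_adj ..).1 hxy).1
  have fuv : f u ≠ f v := (hG _ _).1 ((mono_adj ..).1 huv).1
  set R := monoSubgraph G c b with hR
  set B := monoSubgraph G c (!b) with hB
  -- cross edges
  have cross : ∀ p q, ¬ R.Reachable p q → f p ≠ f q → B.Reachable p q := by
    intro p q h1 h2
    refine SimpleGraph.Adj.reachable ((mono_adj ..).2 ⟨(hG _ _).2 h2, ?_⟩)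
    by_contra h3
    refine h1 (SimpleGraph.Adj.reachable ((mono_adj ..).2 ⟨(hG _ _).2 h2, ?_⟩))
    cases hc : c s(p, q) <;> cases b <;> simp_all
  have hxv : ¬ R.Reachable x v := fun h => hxu (h.trans huv'.symm)
  have hyu : ¬ R.Reachable y u := fun h => hxu (hyx.trans h)
  have hyv : ¬ R.Reachable y v := fun h => hxv (hyx.trans h)
  -- given p not red-reachable from x, it is joined to x or y in B
  have jxy : ∀ p, ¬ R.Reachable x p → B.Reachable x p ∨ B.Reachable y p := by
    intro p hp
    by_cases h : f x = f p
    · right; exact cross _ _ (fun h' => hp (hyx.trans h')) (fun h' => fxy (h.trans h'.symm))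
    · left; exact cross _ _ hp h
  have juv : ∀ p, ¬ R.Reachable u p → B.Reachable u p ∨ B.Reachable v p := by
    intro p hp
    by_cases h : f u = f p
    · right; exact cross _ _ (fun h' => hp (huv'.trans h')) (fun h' => fuv (h.trans h'.symm))
    · left; exact cross _ _ hp h
  obtain ⟨z, hz1, hz2⟩ : ∃ z, f z ≠ f x ∧ f z ≠ f y := by
    have : ∀ i j : Fin 3, ∃ k, k ≠ i ∧ k ≠ j := by decide
    obtain ⟨k, hk⟩ := this (f x) (f y)
    obtain ⟨z, rfl⟩ := hf k
    exact ⟨z, hk⟩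
  have four : B.Reachable x y ∧ B.Reachable x u ∧ B.Reachable x v := by
    have s1 : B.Reachable x y → B.Reachable x y ∧ B.Reachable x u ∧ B.Reachable x v := by
      intro h
      refine ⟨h, ?_, ?_⟩
      · rcases jxy u hxu with h' | h'
        · exact h'
        · exact h.trans h'
      · rcases jxy v hxv with h' | h'
        · exact h'
        · exact h.trans h'
    have s2 : B.Reachable u v → B.Reachable x y ∧ B.Reachable x u ∧ B.Reachable x v := by
      intro h
      have hx : B.Reachable u x := by
        rcases juv x (fun h => hxu h.symm) with h' | h'
        · exact h'
        · exact h.trans h'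
      have hy : B.Reachable u y := by
        rcases juv y (fun h => hyu h.symm) with h' | h'
        · exact h'
        · exact h.trans h'
      exact ⟨hx.symm.trans hy, hx.symm, hx.symm.trans h⟩
    by_cases hz : R.Reachable x z
    · have hzu : ¬ R.Reachable u z := fun h => hxu (hz.trans h.symm)
      have hzv : ¬ R.Reachable v z := fun h => hxv (hz.trans h.symm)
      by_cases h1 : f z = f u
      · exact s1 ((cross x u hxu (h1 ▸ hz1.symm)).trans (cross y u hyu (h1 ▸ hz2.symm)).symm)
      by_cases h2 : f z = f v
      · exact s1 ((cross x v hxv (h2 ▸ hz1.symm)).trans (cross y v hyv (h2 ▸ hz2.symm)).symm)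
      exact s2 ((cross u z hzu (Ne.symm h1)).trans (cross v z hzv (Ne.symm h2)).symm)
    · exact s1 ((cross x z hz hz1.symm).trans
        (cross y z (fun h => hz (hyx.trans h)) hz2.symm).symm)
  have all : ∀ p, B.Reachable x p := by
    intro p
    by_cases hp : R.Reachable x p
    · rcases juv p (fun h => hxu (hp.trans h.symm)) with h | h
      · exact four.2.1.trans h
      · exact four.2.2.trans h
    · rcases jxy p hp with h | h
      · exact h
      · exact four.1.trans h
  intro p _ q _ _ _
  exact (all p).symm.trans (all q)

lemma main_aux {V : Type*} [Fintype V]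
    (f : V → Fin 3) (hf : Function.Surjective f)
    (G : SimpleGraph V) (hG : ∀ x y, G.Adj x y ↔ f x ≠ f y)
    (hfair : ∀ i : Fin 3, 2 * ({v | f v = i} : Set V).ncard ≤ Fintype.card V)
    (heven : Even (Fintype.card V))
    (c : Sym2 V → Bool) (b : Bool) (hone : OneComp G c b) :
    ∃ MR MB : Set (Sym2 V),
      IsConnMatching G c b MR ∧ IsConnMatching G c (!b) MB ∧
      Disjoint (matchSupport MR) (matchSupport MB) ∧
      matchSupport MR ∪ matchSupport MB = Set.univ := by
  classical
  obtain ⟨σ₀, i0, h0⟩ := exists_ffinv heven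
  obtain ⟨σ₁, i1, h1⟩ := swap_lemma (fun x y => x ≠ y) G.Adj (fun x h => h rfl)
    (fun x y h => h.symm) (fun x y h => h.ne) (by
      intro x y _ hxy
      have hxy : f x = f y := by
        by_contra h
        exact hxy ((hG _ _).2 h)
      refine ⟨Finset.univ.filter (fun v => f v = f x), by simp, by simp [hxy], ?_, ?_⟩
      · have := hfair (f x)
        rwa [Set.ncard_eq_toFinset_card', Set.toFinset_ofPred] at this
      · intro u v hu hv _
        left
        simp only [Finset.mem_filter, Finset.mem_univ, true_and] at hu hv
        exact ⟨(hG _ _).2 (Ne.symm hu), (hG _ _).2 (hxy ▸ Ne.symm hv)⟩) _ σ₀ i0 h0 le_rfl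
  set B := monoSubgraph G c (!b) with hB
  obtain ⟨r0, -⟩ := hf 0
  obtain ⟨r, -, hr⟩ := Finset.exists_max_image Finset.univ
    (fun v => (Finset.univ.filter (fun w => B.Reachable v w)).card) ⟨r0, Finset.mem_univ _⟩
  have hcol : ∀ x y, c s(x, y) = b ∨ c s(x, y) = !b := by
    intro x y; cases c s(x, y) <;> cases b <;> simp
  obtain ⟨σ, i2, h2⟩ := swap_lemma G.Adj
    (fun x y => G.Adj x y ∧ (c s(x, y) = !b → B.Reachable r x)) (fun x h => h.ne rfl)
    (fun x y h => ⟨h.1.symm, fun hc => by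
      rw [Sym2.eq_swap] at hc
      exact (h.2 hc).trans (SimpleGraph.Adj.reachable ((mono_adj ..).2 ⟨h.1, hc⟩))⟩)
    (fun x y h => h.1) (by
      intro x y hxy hn
      have hc : c s(x, y) = !b ∧ ¬ B.Reachable r x := by
        constructor
        · by_contra h; exact hn ⟨hxy, fun h' => absurd h' h⟩
        · intro h; exact hn ⟨hxy, fun _ => h⟩
      obtain ⟨hc, hrx⟩ := hc
      have hBxy : B.Reachable x y := SimpleGraph.Adj.reachable ((mono_adj ..).2 ⟨hxy, hc⟩)
      refine ⟨Finset.univ.filter (fun w => B.Reachable x w), by simp, by simpa using hBxy, ?_, ?_⟩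
      · have h3 := hr x (Finset.mem_univ _)
        have hd : Disjoint (Finset.univ.filter (fun w => B.Reachable x w))
            (Finset.univ.filter (fun w => B.Reachable r w)) := by
          rw [Finset.disjoint_left]
          intro w hw hw'
          simp only [Finset.mem_filter, Finset.mem_univ, true_and] at hw hw'
          exact hrx (hw'.trans hw.symm)
        have h4 := Finset.card_le_univ (Finset.univ.filter (fun w => B.Reachable x w) ∪
            (Finset.univ.filter (fun w => B.Reachable r w)))
        rw [Finset.card_union_of_disjoint hd] at h4
        omega
      · intro u v hu hv huv
        simp only [Finset.mem_filter, Finset.mem_univ, true_and] at hu hv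
        have K : ∀ p q, B.Reachable x p → ¬ B.Reachable x q → f p ≠ f q →
            (G.Adj p q ∧ (c s(p, q) = !b → B.Reachable r p)) := by
          intro p q hp hq hpq
          have := (hG _ _).2 hpq
          refine ⟨this, fun hc => absurd (hp.trans ?_) hq⟩
          exact SimpleGraph.Adj.reachable ((mono_adj ..).2 ⟨this, hc⟩)
        have fxy := (hG _ _).1 hxy
        have fuv := (hG _ _).1 huv
        have rx : B.Reachable x x := SimpleGraph.Reachable.refl _
        by_cases hA : f x ≠ f u ∧ f y ≠ f v
        · left; exact ⟨K _ _ rx hu hA.1, K _ _ hBxy hv hA.2⟩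
        · have hA' : f x ≠ f v ∧ f y ≠ f u := by
            generalize f x = a1 at *
            generalize f y = a2 at *
            generalize f u = a3 at *
            generalize f v = a4 at *
            grind
          right; exact ⟨K _ _ rx hv hA'.1, K _ _ hBxy hu hA'.2⟩) _ σ₁ i1 h1 le_rfl
  have hmem : ∀ x v, x ∈ s(v, σ v) → s(v, σ v) = s(x, σ x) := by
    intro x v hx
    rcases Sym2.mem_iff.1 hx with h | h
    · rw [h]
    · rw [h, i2, Sym2.eq_swap]
  have hM : ∀ a : Bool, (∀ x y, c s(x, σ x) = a → c s(y, σ y) = a →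
      (monoSubgraph G c a).Reachable x y) →
      IsConnMatching G c a {e | ∃ v, e = s(v, σ v) ∧ c e = a} := by
    intro a ha
    refine ⟨?_, ?_, ?_⟩
    · rintro _ ⟨v, rfl, hv⟩
      exact ⟨(h2 v).1, hv⟩
    · rintro _ ⟨v, rfl, hv⟩ _ ⟨w, rfl, hw⟩ hne x hx hx'
      exact hne ((hmem _ _ hx).trans (hmem _ _ hx').symm)
    · rintro _ ⟨v, rfl, hv⟩ _ ⟨w, rfl, hw⟩ x hx y hy
      rw [hmem _ _ hx] at hv
      rw [hmem _ _ hy] at hw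
      exact ha x y hv hw
  have hsup : ∀ (a : Bool) x,
      x ∈ matchSupport {e | ∃ v, e = s(v, σ v) ∧ c e = a} ↔ c s(x, σ x) = a := by
    intro a x
    constructor
    · rintro ⟨_, ⟨v, rfl, hv⟩, hx⟩
      rwa [← hmem _ _ hx]
    · intro h
      exact ⟨s(x, σ x), ⟨x, rfl, h⟩, Sym2.mem_mk_left _ _⟩
  refine ⟨_, _, hM b ?_, hM (!b) ?_, ?_, ?_⟩
  · intro x y hx hy
    exact hone x (σ x) y (σ y) ((mono_adj ..).2 ⟨(h2 x).1, hx⟩) ((mono_adj ..).2 ⟨(h2 y).1, hy⟩)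
  · intro x y hx hy
    exact ((h2 x).2 hx).symm.trans ((h2 y).2 hy)
  · rw [Set.disjoint_left]
    intro x hx hx'
    rw [hsup] at hx hx'
    rw [hx] at hx'
    cases b <;> simp at hx'
  · ext x
    simp only [Set.mem_union, Set.mem_univ, iff_true, hsup]
    exact hcol _ _

/-- Lemma 4.1: any fair complete tripartite graph on an even number of vertices, with
red/blue-coloured edges, can be covered by a red connected matching and a blue connected
matching which are vertex-disjoint (either matching may be empty). -/
theorem stmt10 {V : Type*} [Fintype V]
    (f : V → Fin 3) (hf : Function.Surjective f)
    (G : SimpleGraph V) (hG : ∀ x y, G.Adj x y ↔ f x ≠ f y)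
    (hfair : ∀ i : Fin 3, 2 * ({v | f v = i} : Set V).ncard ≤ Fintype.card V)
    (heven : Even (Fintype.card V))
    (c : Sym2 V → Bool) :
    ∃ MR MB : Set (Sym2 V),
      IsConnMatching G c true MR ∧ IsConnMatching G c false MB ∧
      Disjoint (matchSupport MR) (matchSupport MB) ∧
      matchSupport MR ∪ matchSupport MB = Set.univ := by
  by_cases h : OneComp G c true
  · exact main_aux f hf G hG hfair heven c true h
  · obtain ⟨MB, MR, h1, h2, h3, h4⟩ :=
      main_aux f hf G hG hfair heven c false (oneComp_or f hf G hG c true h)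
    exact ⟨MR, MB, h2, h1, h3.symm, by rw [Set.union_comm]; exact h4⟩
end

section
/- Let 0 < ε < 1/5 and let G be a balanced bipartite graph on n vertices with partition classes V₁, V₂ of size n/2 each, such that every vertex of G has degree at least (1 − ε)n/2. If the edges of G are coloured red and blue and this colouring is not a split colouring, then there exist a red connected matching and a blue connected matching which are vertex-disjoint and together cover all but at most 4εn vertices of G. -/
open SimpleGraph Set

/-- Abstract setting: `R`, `B` are the red and blue edge relations between `X` and `Y`,
`r`, `q` label the red and blue components. -/
structure SplitSetup {V : Type*} (R B : V → V → Prop) (r q : V → V) (X Y : Finset V)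
    (m d : ℕ) : Prop where
  hR : ∀ x y, R x y → r x = r y
  hB : ∀ x y, B x y → q x = q y
  sR : ∀ x y, R x y → R y x
  sB : ∀ x y, B x y → B y x
  cX : X.card = m
  cY : Y.card = m
  hX : ∀ x ∈ X, ∀ T ⊆ Y, (∀ y ∈ T, ¬ (R x y ∨ B x y)) → T.card ≤ d
  hY : ∀ y ∈ Y, ∀ S ⊆ X, (∀ x ∈ S, ¬ (R y x ∨ B y x)) → S.card ≤ d
  hd : 5 * d < m

/-- There are a red and a blue component whose edges have a large matching (Hall form). -/
def SplitGood {V : Type*} (R B : V → V → Prop) (r q : V → V) (X Y : Finset V)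
    (m d : ℕ) : Prop :=
  ∃ i j, ∀ S ⊆ X, ∀ T ⊆ Y, m + 4 * d < S.card + T.card →
    ∃ x ∈ S, ∃ y ∈ T, (R x y ∧ r x = i) ∨ (B x y ∧ q x = j)

namespace SplitSetup

variable {V : Type*} {R B : V → V → Prop} {r q : V → V} {X Y : Finset V} {m d : ℕ}

theorem swap (h : SplitSetup R B r q X Y m d) : SplitSetup R B r q Y X m d :=
  ⟨h.hR, h.hB, h.sR, h.sB, h.cY, h.cX, h.hY, h.hX, h.hd⟩

theorem colSwap (h : SplitSetup R B r q X Y m d) : SplitSetup B R q r X Y m d :=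
  ⟨h.hB, h.hR, h.sB, h.sR, h.cX, h.cY,
    fun x hx T hT hn => h.hX x hx T hT (fun y hy => by rw [or_comm]; exact hn y hy),
    fun x hx T hT hn => h.hY x hx T hT (fun y hy => by rw [or_comm]; exact hn y hy), h.hd⟩

theorem good_swap (h : SplitSetup R B r q X Y m d) (hg : SplitGood R B r q Y X m d) :
    SplitGood R B r q X Y m d := by
  obtain ⟨i, j, hg⟩ := hg
  refine ⟨i, j, fun S hS T hT hc => ?_⟩
  obtain ⟨y, hy, x, hx, hxy⟩ := hg T hT S hS (by omega)
  refine ⟨x, hx, y, hy, ?_⟩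
  rcases hxy with ⟨h1, h2⟩ | ⟨h1, h2⟩
  · exact Or.inl ⟨h.sR _ _ h1, by rw [← h.hR _ _ h1]; exact h2⟩
  · exact Or.inr ⟨h.sB _ _ h1, by rw [← h.hB _ _ h1]; exact h2⟩

theorem good_colSwap (hg : SplitGood B R q r X Y m d) : SplitGood R B r q X Y m d := by
  obtain ⟨i, j, hg⟩ := hg
  refine ⟨j, i, fun S hS T hT hc => ?_⟩
  obtain ⟨x, hx, y, hy, hxy⟩ := hg S hS T hT hc
  exact ⟨x, hx, y, hy, hxy.symm⟩

/-- A vertex of `X` has a neighbour in any subset of `Y` with more than `d` elements. -/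
theorem exNbr (h : SplitSetup R B r q X Y m d) {x : V} (hx : x ∈ X) {T : Finset V}
    (hT : T ⊆ Y) (hc : d < T.card) : ∃ y ∈ T, R x y ∨ B x y := by
  by_contra hn
  push Not at hn
  have := h.hX x hx T hT (fun y hy hh => by have := hn y hy; tauto)
  omega

/-- Two vertices of `X` have a common neighbour in any big subset of `Y`. -/
theorem exCommon (h : SplitSetup R B r q X Y m d) {x x' : V} (hx : x ∈ X) (hx' : x' ∈ X)
    {T : Finset V} (hT : T ⊆ Y) (hc : 2 * d < T.card) :
    ∃ y ∈ T, (R x y ∨ B x y) ∧ (R x' y ∨ B x' y) := by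
  classical
  have h1 := h.hX x hx (T.filter (fun y => ¬ (R x y ∨ B x y)))
    ((Finset.filter_subset _ _).trans hT) (fun y hy => (Finset.mem_filter.1 hy).2)
  have h2 := Finset.card_filter_add_card_filter_not (s := T) (fun y => R x y ∨ B x y)
  obtain ⟨y, hy, hxy⟩ := h.exNbr hx' (T := T.filter (fun y => (R x y ∨ B x y)))
    ((Finset.filter_subset _ _).trans hT) (by omega)
  rw [Finset.mem_filter] at hy
  exact ⟨y, hy.1, hy.2, hxy⟩

open Classical in
theorem cell (h : SplitSetup R B r q X Y m d) (i j : V)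
    (hc : m ≤ (X.filter (fun x => r x = i ∧ q x = j)).card + 3 * d) :
    SplitGood R B r q X Y m d := by
  refine ⟨i, j, fun S hS T hT hST => ?_⟩
  have hTY := Finset.card_le_card hT
  have hcY := h.cY
  have hcX := h.cX
  have h1 : 0 < (S ∩ X.filter (fun x => r x = i ∧ q x = j)).card := by
    have h2 := Finset.card_inter_add_card_union S (X.filter (fun x => r x = i ∧ q x = j))
    have h3 : (S ∪ X.filter (fun x => r x = i ∧ q x = j)).card ≤ X.card :=
      Finset.card_le_card (Finset.union_subset hS (Finset.filter_subset _ _))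
    omega
  obtain ⟨x, hx⟩ := Finset.card_pos.1 h1
  rw [Finset.mem_inter, Finset.mem_filter] at hx
  obtain ⟨hxS, hxX, hxi, hxj⟩ := hx
  have hSX := Finset.card_le_card hS
  obtain ⟨y, hy, hxy⟩ := h.exNbr hxX hT (by omega)
  exact ⟨x, hxS, y, hy, hxy.imp (fun a => ⟨a, hxi⟩) (fun a => ⟨a, hxj⟩)⟩

open Classical in
theorem spanning (h : SplitSetup R B r q X Y m d) (i : V)
    (hXi : ∀ x ∈ X, r x = i) : SplitGood R B r q X Y m d := by
  have hcX := h.cX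
  have hcY := h.cY
  have hd := h.hd
  have hne : X.Nonempty := by rw [← Finset.card_pos]; omega
  obtain ⟨v, hv, hmax⟩ := X.exists_max_image
    (fun v => (X.filter (fun x => q x = q v)).card + (Y.filter (fun x => q x = q v)).card) hne
  refine ⟨i, q v, fun S hS T hT hST => ?_⟩
  by_contra hno
  push Not at hno
  have hSX := Finset.card_le_card hS
  have hTY := Finset.card_le_card hT
  have hblue : ∀ x ∈ S, ∀ y ∈ T, (R x y ∨ B x y) → q x = q y ∧ q x ≠ q v := by
    intro x hx y hy hxy
    have h1 := hno x hx y hy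
    rcases hxy with hr | hb
    · exact absurd (hXi x (hS hx)) (h1.1 hr)
    · exact ⟨h.hB _ _ hb, h1.2 hb⟩
  obtain ⟨x0, hx0⟩ : S.Nonempty := by rw [← Finset.card_pos]; omega
  have hSq : ∀ x ∈ S, q x = q x0 := by
    intro x hx
    obtain ⟨y, hy, h1, h2⟩ := h.exCommon (hS hx) (hS hx0) hT (by omega)
    rw [(hblue x hx y hy h1).1, (hblue x0 hx0 y hy h2).1]
  have hTq : ∀ y ∈ T, q y = q x0 := by
    intro y hy
    obtain ⟨x, hx, hxy⟩ := h.swap.exNbr (hT hy) hS (by omega)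
    have hxy' : R x y ∨ B x y := hxy.imp (h.sR _ _) (h.sB _ _)
    rw [← (hblue x hx y hy hxy').1, hSq x hx]
  have hne : q x0 ≠ q v := by
    obtain ⟨y, hy, hxy⟩ := h.exNbr (hS hx0) hT (by omega)
    exact (hblue x0 hx0 y hy hxy).2
  have hm := hmax x0 (hS hx0)
  have a1 : S.card ≤ (X.filter (fun x => q x = q x0)).card :=
    Finset.card_le_card (fun x hx => Finset.mem_filter.2 ⟨hS hx, hSq x hx⟩)
  have a2 : T.card ≤ (Y.filter (fun x => q x = q x0)).card :=
    Finset.card_le_card (fun x hx => Finset.mem_filter.2 ⟨hT hx, hTq x hx⟩)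
  have key : ∀ Z : Finset V, (Z.filter (fun x => q x = q x0)).card +
      (Z.filter (fun x => q x = q v)).card ≤ Z.card := by
    intro Z
    rw [← Finset.card_union_of_disjoint]
    · exact Finset.card_le_card
        (Finset.union_subset (Finset.filter_subset _ _) (Finset.filter_subset _ _))
    · rw [Finset.disjoint_filter]
      intro x _ h1 h2
      exact hne (h1.symm.trans h2)
  have k1 := key X
  have k2 := key Y
  omega

theorem lineX (h : SplitSetup R B r q X Y m d)
    (hp : ∀ x ∈ X, ∀ x' ∈ X, r x = r x' ∨ q x = q x') :
    (∃ i, ∀ x ∈ X, r x = i) ∨ (∃ j, ∀ x ∈ X, q x = j) := by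
  have hne : X.Nonempty := by
    rw [← Finset.card_pos]; have := h.cX; have := h.hd; omega
  obtain ⟨x0, hx0⟩ := hne
  by_contra hn
  push Not at hn
  obtain ⟨x1, hx1, h1⟩ := hn.1 (r x0)
  obtain ⟨x2, hx2, h2⟩ := hn.2 (q x0)
  have a1 := hp x1 hx1 x0 hx0
  have a2 := hp x2 hx2 x0 hx0
  have a3 := hp x1 hx1 x2 hx2
  grind

/-- Two vertices of `X` in different rows and columns: good or split. -/
theorem diag (h : SplitSetup R B r q X Y m d) {x x' : V} (hx : x ∈ X) (hx' : x' ∈ X)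
    (hr : r x ≠ r x') (hq : q x ≠ q x') :
    SplitGood R B r q X Y m d ∨
    ((∀ z ∈ X, (r z = r x ∧ q z = q x) ∨ (r z = r x' ∧ q z = q x')) ∧
     (∀ y ∈ Y, (r y = r x ∧ q y = q x') ∨ (r y = r x' ∧ q y = q x))) := by
  classical
  by_cases hg : SplitGood R B r q X Y m d
  · exact Or.inl hg
  right
  have hgY : ∀ i j, (Y.filter (fun x => r x = i ∧ q x = j)).card + 3 * d < m := by
    intro i j
    by_contra hc
    exact hg (h.good_swap (h.swap.cell i j (by omega)))
  have hgX : ∀ i j, (X.filter (fun x => r x = i ∧ q x = j)).card + 3 * d < m := by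
    intro i j
    by_contra hc
    exact hg (h.cell i j (by omega))
  have hcX := h.cX
  have hcY := h.cY
  have hd := h.hd
  -- generic step
  have step : ∀ (X Y : Finset V) (i j k l : V), SplitSetup R B r q X Y m d → i ≠ k → j ≠ l →
      d < (Y.filter (fun y => r y = i ∧ q y = l)).card →
      d < (Y.filter (fun y => r y = k ∧ q y = j)).card →
      ∀ z ∈ X, (r z = i ∧ q z = j) ∨ (r z = k ∧ q z = l) := by
    intro X Y i j k l h hik hjl h1 h2 z hz
    obtain ⟨y1, hy1, e1⟩ := h.exNbr hz (Finset.filter_subset _ _) h1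
    obtain ⟨y2, hy2, e2⟩ := h.exNbr hz (Finset.filter_subset _ _) h2
    rw [Finset.mem_filter] at hy1 hy2
    have b1 : r z = r y1 ∨ q z = q y1 := e1.imp (h.hR _ _) (h.hB _ _)
    have b2 : r z = r y2 ∨ q z = q y2 := e2.imp (h.hR _ _) (h.hB _ _)
    grind
  -- the number of vertices of Y outside the two cells
  have hYsum : m ≤ (Y.filter (fun y => r y = r x ∧ q y = q x')).card +
      (Y.filter (fun y => r y = r x' ∧ q y = q x)).card + 2 * d := by
    have hsub : Y ⊆ (Y.filter (fun y => r y = r x ∧ q y = q x') ∪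
        Y.filter (fun y => r y = r x' ∧ q y = q x)) ∪
        (Y.filter (fun y => ¬ (R x y ∨ B x y)) ∪ Y.filter (fun y => ¬ (R x' y ∨ B x' y))) := by
      intro y hy
      simp only [Finset.mem_union, Finset.mem_filter]
      by_cases e1 : R x y ∨ B x y
      · by_cases e2 : R x' y ∨ B x' y
        · left
          have b1 : r x = r y ∨ q x = q y := e1.imp (h.hR _ _) (h.hB _ _)
          have b2 : r x' = r y ∨ q x' = q y := e2.imp (h.hR _ _) (h.hB _ _)
          grind
        · exact Or.inr (Or.inr ⟨hy, e2⟩)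
      · exact Or.inr (Or.inl ⟨hy, e1⟩)
    have c1 := Finset.card_le_card hsub
    have c2 := Finset.card_union_le (Y.filter (fun y => r y = r x ∧ q y = q x') ∪
        Y.filter (fun y => r y = r x' ∧ q y = q x))
        (Y.filter (fun y => ¬ (R x y ∨ B x y)) ∪ Y.filter (fun y => ¬ (R x' y ∨ B x' y)))
    have c3 := Finset.card_union_le (Y.filter (fun y => r y = r x ∧ q y = q x'))
        (Y.filter (fun y => r y = r x' ∧ q y = q x))
    have c4 := Finset.card_union_le
        (Y.filter (fun y => ¬ (R x y ∨ B x y))) (Y.filter (fun y => ¬ (R x' y ∨ B x' y)))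
    have c5 := h.hX x hx (Y.filter (fun y => ¬ (R x y ∨ B x y)))
      (Finset.filter_subset _ _) (fun y hy => (Finset.mem_filter.1 hy).2)
    have c6 := h.hX x' hx' (Y.filter (fun y => ¬ (R x' y ∨ B x' y)))
      (Finset.filter_subset _ _) (fun y hy => (Finset.mem_filter.1 hy).2)
    omega
  have g1 := hgY (r x) (q x')
  have g2 := hgY (r x') (q x)
  have hXs := step X Y (r x) (q x) (r x') (q x') h hr hq (by omega) (by omega)
  refine ⟨hXs, ?_⟩
  have hXsum : m ≤ (X.filter (fun y => r y = r x ∧ q y = q x)).card +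
      (X.filter (fun y => r y = r x' ∧ q y = q x')).card := by
    have hsub : X ⊆ X.filter (fun y => r y = r x ∧ q y = q x) ∪
        X.filter (fun y => r y = r x' ∧ q y = q x') := by
      intro z hz
      simp only [Finset.mem_union, Finset.mem_filter]
      exact (hXs z hz).imp (fun a => ⟨hz, a⟩) (fun a => ⟨hz, a⟩)
    have c1 := Finset.card_le_card hsub
    have c2 := Finset.card_union_le (X.filter (fun y => r y = r x ∧ q y = q x))
      (X.filter (fun y => r y = r x' ∧ q y = q x'))
    omega
  have g3 := hgX (r x) (q x)
  have g4 := hgX (r x') (q x')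
  exact step Y X (r x) (q x') (r x') (q x) h.swap hr hq.symm (by omega) (by omega)

theorem main (h : SplitSetup R B r q X Y m d) :
    SplitGood R B r q X Y m d ∨
    ∃ i j k l, i ≠ k ∧ j ≠ l ∧
    (∀ z ∈ X, (r z = i ∧ q z = j) ∨ (r z = k ∧ q z = l)) ∧
     (∀ y ∈ Y, (r y = i ∧ q y = l) ∨ (r y = k ∧ q y = j)) := by
  by_cases hXd : ∃ x ∈ X, ∃ x' ∈ X, r x ≠ r x' ∧ q x ≠ q x'
  · obtain ⟨x, hx, x', hx', hr, hq⟩ := hXd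
    rcases h.diag hx hx' hr hq with hg | hs
    · exact Or.inl hg
    · exact Or.inr ⟨r x, q x, r x', q x', hr, hq, hs.1, hs.2⟩
  left
  have lX := h.lineX (by grind)
  rcases lX with ⟨i, hi⟩ | ⟨j, hj⟩
  · exact h.spanning i hi
  · exact good_colSwap (h.colSwap.spanning j hj)

end SplitSetup

/-- Deficiency version of Hall's theorem. -/
theorem hall_deficiency {V : Type*} [DecidableEq V] (H : V → V → Prop) (X Y : Finset V)
    (m k : ℕ) (cY : Y.card = m)
    (hH : ∀ S ⊆ X, ∀ T ⊆ Y, m + k < S.card + T.card → ∃ x ∈ S, ∃ y ∈ T, H x y) :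
    ∃ g : X → V ⊕ Fin k, Function.Injective g ∧
      ∀ x y, g x = Sum.inl y → y ∈ Y ∧ H x y := by
  classical
  let t : X → Finset (V ⊕ Fin k) := fun x =>
    (Y.filter (fun y => H x y)).disjSum Finset.univ
  have hall := (Finset.all_card_le_biUnion_card_iff_exists_injective t).1 ?_
  · obtain ⟨g, hg, hgt⟩ := hall
    refine ⟨g, hg, fun x y hxy => ?_⟩
    have := hgt x
    rw [hxy, Finset.inl_mem_disjSum, Finset.mem_filter] at this
    exact this
  · intro s
    rcases s.eq_empty_or_nonempty with rfl | ⟨x0, hx0⟩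
    · simp
    by_contra hlt
    push Not at hlt
    let N : Finset V := Y.filter (fun y => ∃ x ∈ s, H x y)
    have hsub : N.disjSum (Finset.univ : Finset (Fin k)) ⊆ s.biUnion t := by
      intro z hz
      rw [Finset.mem_biUnion]
      rcases z with y | a
      · rw [Finset.inl_mem_disjSum, Finset.mem_filter] at hz
        obtain ⟨hy, x, hx, hxy⟩ := hz
        exact ⟨x, hx, by
          rw [Finset.inl_mem_disjSum, Finset.mem_filter]; exact ⟨hy, hxy⟩⟩
      · exact ⟨x0, hx0, by rw [Finset.inr_mem_disjSum]; exact Finset.mem_univ _⟩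
    have c1 := Finset.card_le_card hsub
    rw [Finset.card_disjSum, Finset.card_univ, Fintype.card_fin] at c1
    have c2 : (s.map (Function.Embedding.subtype _)).card = s.card := Finset.card_map _
    have c3 := Finset.card_filter_add_card_filter_not (s := Y) (fun y => ∃ x ∈ s, H x y)
    obtain ⟨x, hx, y, hy, hxy⟩ := hH (s.map (Function.Embedding.subtype _))
      (by intro x hx; rw [Finset.mem_map] at hx; obtain ⟨a, _, rfl⟩ := hx; exact a.2)
      (Y.filter (fun y => ¬ ∃ x ∈ s, H x y)) (Finset.filter_subset _ _)
      (by rw [c2]; change N.card + _ = _ at c3; omega)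
    rw [Finset.mem_map] at hx
    obtain ⟨a, ha, rfl⟩ := hx
    rw [Finset.mem_filter] at hy
    exact hy.2 ⟨a, ha, hxy⟩

/-- Vertices of a colour class component, as representatives. -/
noncomputable def monoRep {V : Type*} (G : SimpleGraph V) (c : Sym2 V → Bool) (b : Bool)
    (v : V) : V := ((monoSubgraph G c b).connectedComponentMk v).out

theorem monoRep_eq_iff {V : Type*} (G : SimpleGraph V) (c : Sym2 V → Bool) (b : Bool)
    (u v : V) : monoRep G c b u = monoRep G c b v ↔ (monoSubgraph G c b).Reachable u v := by
  rw [← SimpleGraph.ConnectedComponent.eq]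
  constructor
  · intro h
    have := congrArg (monoSubgraph G c b).connectedComponentMk h
    simpa [monoRep, SimpleGraph.connectedComponentMk] using this
  · intro h
    unfold monoRep
    rw [h]

theorem monoRep_of_adj {V : Type*} {G : SimpleGraph V} {c : Sym2 V → Bool} {b : Bool}
    {u v : V} (h : G.Adj u v) (hc : c s(u, v) = b) : monoRep G c b u = monoRep G c b v := by
  rw [monoRep_eq_iff]
  apply SimpleGraph.Adj.reachable
  unfold monoSubgraph
  rw [SimpleGraph.fromEdgeSet_adj]
  exact ⟨⟨h, hc⟩, h.ne⟩

theorem connMatching_aux {V : Type*} (G : SimpleGraph V) (c : Sym2 V → Bool) (b : Bool)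
    (X Y : Finset V) (hXY : Disjoint X Y) (k : ℕ) (g : X → V ⊕ Fin k)
    (hg : Function.Injective g) (i : V)
    (h : ∀ x y, g x = Sum.inl y → y ∈ Y ∧ G.Adj x y ∧
      (c s(x.1, y) = b → monoRep G c b x = i)) :
    IsConnMatching G c b {e | ∃ x y, g x = Sum.inl y ∧ c s(x.1, y) = b ∧ e = s(x.1, y)} := by
  have hne : ∀ x ∈ X, ∀ y ∈ Y, x ≠ y := fun x hx y hy hxy =>
    Finset.disjoint_left.1 hXY hx (hxy ▸ hy)
  have hrep : ∀ (x : X) y, g x = Sum.inl y → c s(x.1, y) = b → ∀ z, z ∈ s(x.1, y) →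
      monoRep G c b z = i := by
    intro x y hxy hc z hz
    obtain ⟨h1, h2, h3⟩ := h x y hxy
    rcases Sym2.mem_iff.1 hz with rfl | rfl
    · exact h3 hc
    · rw [← monoRep_of_adj h2 hc]; exact h3 hc
  refine ⟨?_, ?_, ?_⟩
  · rintro e ⟨x, y, hxy, hc, rfl⟩
    exact ⟨(h x y hxy).2.1, hc⟩
  · rintro e ⟨x, y, hxy, hc, rfl⟩ e' ⟨x', y', hxy', hc', rfl⟩ hee z hz hz'
    have hyY := (h x y hxy).1
    have hyY' := (h x' y' hxy').1
    rcases Sym2.mem_iff.1 hz with rfl | rfl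
    · rcases Sym2.mem_iff.1 hz' with h1 | h1
      · have hx : x = x' := Subtype.ext h1
        subst hx
        rw [hxy] at hxy'
        cases hxy'
        exact hee rfl
      · exact hne _ x.2 _ hyY' h1
    · rcases Sym2.mem_iff.1 hz' with h1 | h1
      · exact hne _ x'.2 _ hyY h1.symm
      · subst h1
        have hx : x = x' := hg (hxy.trans hxy'.symm)
        subst hx
        exact hee rfl
  · rintro e ⟨x, y, hxy, hc, rfl⟩ e' ⟨x', y', hxy', hc', rfl⟩ z hz z' hz'
    rw [← monoRep_eq_iff, hrep x y hxy hc z hz, hrep x' y' hxy' hc' z' hz']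

theorem good_to_matching {V : Type*} [Fintype V] (G : SimpleGraph V) (c : Sym2 V → Bool)
    (X Y : Finset V) (hXY : Disjoint X Y) (hcov : ∀ v, v ∈ X ∨ v ∈ Y) (m d : ℕ)
    (cX : X.card = m) (cY : Y.card = m)
    (hgood : SplitGood (fun x y => G.Adj x y ∧ c s(x, y) = true)
      (fun x y => G.Adj x y ∧ c s(x, y) = false) (monoRep G c true) (monoRep G c false)
      X Y m d) :
    ∃ MR MB : Set (Sym2 V),
      IsConnMatching G c true MR ∧ IsConnMatching G c false MB ∧
      Disjoint (matchSupport MR) (matchSupport MB) ∧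
      (Set.univ \ (matchSupport MR ∪ matchSupport MB)).ncard ≤ 8 * d := by
  classical
  obtain ⟨i, j, hgood⟩ := hgood
  obtain ⟨g, hg, hgH⟩ := hall_deficiency _ X Y m (4 * d) cY hgood
  have hne : ∀ x ∈ X, ∀ y ∈ Y, x ≠ y := fun x hx y hy hxy =>
    Finset.disjoint_left.1 hXY hx (hxy ▸ hy)
  refine ⟨_, _, connMatching_aux G c true X Y hXY _ g hg i ?_,
    connMatching_aux G c false X Y hXY _ g hg j ?_, ?_, ?_⟩
  · intro x y hxy
    obtain ⟨h1, h2⟩ := hgH x y hxy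
    refine ⟨h1, by tauto, fun hc => ?_⟩
    rcases h2 with a | a
    · exact a.2
    · exact absurd (hc.symm.trans a.1.2) (by decide)
  · intro x y hxy
    obtain ⟨h1, h2⟩ := hgH x y hxy
    refine ⟨h1, by tauto, fun hc => ?_⟩
    rcases h2 with a | a
    · exact absurd (hc.symm.trans a.1.2) (by decide)
    · exact a.2
  · rw [Set.disjoint_left]
    rintro z ⟨e, ⟨x, y, hxy, hc, rfl⟩, hz⟩ ⟨e', ⟨x', y', hxy', hc', rfl⟩, hz'⟩
    have hyY := (hgH x y hxy).1
    have hyY' := (hgH x' y' hxy').1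
    rcases Sym2.mem_iff.1 hz with rfl | rfl
    · rcases Sym2.mem_iff.1 hz' with h1 | h1
      · have hx : x = x' := Subtype.ext h1
        subst hx
        rw [hxy] at hxy'
        cases hxy'
        simp [hc] at hc'
      · exact hne _ x.2 _ hyY' h1
    · rcases Sym2.mem_iff.1 hz' with h1 | h1
      · exact hne _ x'.2 _ hyY h1.symm
      · subst h1
        have hx : x = x' := hg (hxy.trans hxy'.symm)
        subst hx
        simp [hc] at hc'
  · -- counting
    let P : Finset X := Finset.univ.filter (fun x => ∃ y, g x = Sum.inl y)
    let Q : Finset X := Finset.univ.filter (fun x => ¬ ∃ y, g x = Sum.inl y)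
    have hPQ : P.card + Q.card = m := by
      have := Finset.card_filter_add_card_filter_not (s := (Finset.univ : Finset X))
        (fun x => ∃ y, g x = Sum.inl y)
      rw [Finset.card_univ, Fintype.card_coe, cX] at this
      exact this
    have hQ : Q.card ≤ 4 * d := by
      have h1 : Q.image g ⊆ (Finset.univ : Finset (Fin (4 * d))).map Function.Embedding.inr := by
        intro z hz
        rw [Finset.mem_image] at hz
        obtain ⟨x, hx, rfl⟩ := hz
        have hx2 := (Finset.mem_filter.1 hx).2
        rcases hgx : g x with y | a
        · exact absurd ⟨y, hgx⟩ hx2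
        · simp
      have h2 := Finset.card_le_card h1
      rw [Finset.card_image_of_injective _ hg, Finset.card_map, Finset.card_univ,
        Fintype.card_fin] at h2
      exact h2
    let W : Finset V := Y.filter (fun y => ∃ x, g x = Sum.inl y)
    have hW : P.card ≤ W.card := by
      have h1 : P.image g ⊆ W.map (Function.Embedding.inl : V ↪ V ⊕ Fin (4 * d)) := by
        intro z hz
        rw [Finset.mem_image] at hz
        obtain ⟨x, hx, rfl⟩ := hz
        obtain ⟨y, hy⟩ := (Finset.mem_filter.1 hx).2
        rw [hy, Finset.mem_map]
        exact ⟨y, Finset.mem_filter.2 ⟨(hgH x y hy).1, x, hy⟩, rfl⟩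
      have h2 := Finset.card_le_card h1
      rw [Finset.card_image_of_injective _ hg, Finset.card_map] at h2
      exact h2
    let W' : Finset V := Y.filter (fun y => ¬ ∃ x, g x = Sum.inl y)
    have hWW : W.card + W'.card = m := by
      have := Finset.card_filter_add_card_filter_not (s := Y) (fun y => ∃ x, g x = Sum.inl y)
      rw [cY] at this
      exact this
    have hfin : (Q.map (Function.Embedding.subtype _) ∪ W').card ≤ 8 * d := by
      have := Finset.card_union_le (Q.map (Function.Embedding.subtype _)) W'
      rw [Finset.card_map] at this
      omega
    refine le_trans ?_ hfin
    rw [← Set.ncard_coe_finset]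
    refine Set.ncard_le_ncard ?_ (Finset.finite_toSet _)
    rintro z ⟨_, hz⟩
    rw [Finset.mem_coe, Finset.mem_union]
    have hcovd : ∀ (x : X) y, g x = Sum.inl y → z ∈ s(x.1, y) → False := by
      intro x y hxy hzm
      apply hz
      rcases hcb : c s(x.1, y) with _ | _
      · exact Or.inr ⟨_, ⟨x, y, hxy, hcb, rfl⟩, hzm⟩
      · exact Or.inl ⟨_, ⟨x, y, hxy, hcb, rfl⟩, hzm⟩
    rcases hcov z with hzX | hzY
    · left
      rw [Finset.mem_map]
      refine ⟨⟨z, hzX⟩, Finset.mem_filter.2 ⟨Finset.mem_univ _, ?_⟩, rfl⟩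
      rintro ⟨y, hy⟩
      exact hcovd _ y hy (Sym2.mem_mk_left _ _)
    · right
      refine Finset.mem_filter.2 ⟨hzY, ?_⟩
      rintro ⟨x, hx⟩
      exact hcovd x z hx (Sym2.mem_mk_right _ _)

theorem few_nonnbrs {V : Type*} [Fintype V] (G : SimpleGraph V) [DecidableRel G.Adj]
    (c : Sym2 V → Bool) (X Y : Finset V) (m d : ℕ) (cY : Y.card = m) (x : V)
    (hN : ∀ y, G.Adj x y → y ∈ Y) (hdeg : m ≤ G.degree x + d) :
    ∀ T ⊆ Y, (∀ y ∈ T, ¬ ((G.Adj x y ∧ c s(x, y) = true) ∨ (G.Adj x y ∧ c s(x, y) = false))) →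
      T.card ≤ d := by
  classical
  intro T hT hno
  have hdis : Disjoint T (G.neighborFinset x) := by
    rw [Finset.disjoint_left]
    intro y hy hn
    rw [SimpleGraph.mem_neighborFinset] at hn
    have := hno y hy
    cases hcb : c s(x, y) <;> simp [hcb, hn] at this
  have h1 : (T ∪ G.neighborFinset x).card ≤ Y.card :=
    Finset.card_le_card (Finset.union_subset hT
      (fun y hy => hN y ((SimpleGraph.mem_neighborFinset _ _ _).1 hy)))
  rw [Finset.card_union_of_disjoint hdis, SimpleGraph.card_neighborFinset_eq_degree] at h1
  omega

/-- Lemma 4.3: let `0 < ε < 1/5` and let `G` be a balanced bipartite graph on `n` vertices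
with classes `V₁, V₂` of size `n/2` each, of minimum degree at least `(1 − ε)n/2`. If the
edges are red/blue-coloured and the colouring is not a split colouring, then there are a
red and a blue connected matching, vertex-disjoint, covering all but at most `4εn`
vertices. -/
theorem stmt12 {V : Type*} [Fintype V] (ε : ℝ) (hε0 : 0 < ε) (hε1 : ε < 1 / 5)
    (f : V → Fin 2)
    (G : SimpleGraph V) [DecidableRel G.Adj]
    (hbip : ∀ x y, G.Adj x y → f x ≠ f y)
    (hbal0 : 2 * ({v | f v = 0} : Set V).ncard = Fintype.card V)
    (hbal1 : 2 * ({v | f v = 1} : Set V).ncard = Fintype.card V)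
    (hdeg : ∀ v : V, (1 - ε) * (Fintype.card V : ℝ) / 2 ≤ (G.degree v : ℝ))
    (c : Sym2 V → Bool)
    (hnsplit : ¬ IsSplitColouring G c {v | f v = 0} {v | f v = 1}) :
    ∃ MR MB : Set (Sym2 V),
      IsConnMatching G c true MR ∧ IsConnMatching G c false MB ∧
      Disjoint (matchSupport MR) (matchSupport MB) ∧
      ((Set.univ \ (matchSupport MR ∪ matchSupport MB)).ncard : ℝ) ≤
        4 * ε * (Fintype.card V : ℝ) := by
  classical
  have f01 : ∀ v, f v = 0 ∨ f v = 1 := by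
    intro v
    generalize f v = a
    fin_cases a <;> simp
  rcases isEmpty_or_nonempty V with hV | hV
  · refine ⟨∅, ∅, ?_, ?_, ?_, ?_⟩
    · simp [IsConnMatching]
    · simp [IsConnMatching]
    · simp [matchSupport]
    · have : (Set.univ \ (matchSupport (∅ : Set (Sym2 V)) ∪ matchSupport ∅)) = ∅ :=
        Set.eq_empty_of_isEmpty _
      rw [this]
      simp
  let X : Finset V := Finset.univ.filter (fun v => f v = 0)
  let Y : Finset V := Finset.univ.filter (fun v => f v = 1)
  have hX0 : X.card = ({v | f v = 0} : Set V).ncard := by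
    rw [← Set.ncard_coe_finset]; simp [X]
  have hY0 : Y.card = ({v | f v = 1} : Set V).ncard := by
    rw [← Set.ncard_coe_finset]; simp [Y]
  obtain ⟨m, hm⟩ : ∃ m, m = X.card := ⟨_, rfl⟩
  have hcard : Fintype.card V = 2 * m := by omega
  have hcY : Y.card = m := by omega
  have hpos : 0 < m := by
    have := Fintype.card_pos (α := V)
    omega
  have hcR : (Fintype.card V : ℝ) = 2 * m := by rw [hcard]; push_cast; ring
  have hmR : (0 : ℝ) < m := by exact_mod_cast hpos
  have hem : 0 ≤ ε * m := by positivity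
  have hdle : ((⌊ε * m⌋₊ : ℕ) : ℝ) ≤ ε * m := Nat.floor_le hem
  obtain ⟨d, hd⟩ : ∃ d, d = ⌊ε * m⌋₊ := ⟨_, rfl⟩
  rw [← hd] at hdle
  have h5 : 5 * d < m := by
    have : (5 * d : ℝ) < m := by nlinarith
    exact_mod_cast this
  have hdeg' : ∀ v, m ≤ G.degree v + d := by
    intro v
    by_contra hlt
    push Not at hlt
    have h1 := hdeg v
    rw [hcR] at h1
    have h2 : G.degree v ≤ m := by omega
    have h3 : m - G.degree v ≤ d := by
      rw [hd]
      apply Nat.le_floor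
      rw [Nat.cast_sub h2]
      linarith
    omega
  have hmX : ∀ v, v ∈ X ↔ f v = 0 := by intro v; simp [X]
  have hmY : ∀ v, v ∈ Y ↔ f v = 1 := by intro v; simp [Y]
  have hNX : ∀ x ∈ X, ∀ y, G.Adj x y → y ∈ Y := by
    intro x hx y hxy
    have h1 := hbip x y hxy
    rw [hmX] at hx
    rw [hmY]
    rcases f01 y with h | h
    · exact absurd (hx.trans h.symm) h1
    · exact h
  have hNY : ∀ x ∈ Y, ∀ y, G.Adj x y → y ∈ X := by
    intro x hx y hxy
    have h1 := hbip x y hxy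
    rw [hmY] at hx
    rw [hmX]
    rcases f01 y with h | h
    · exact h
    · exact absurd (hx.trans h.symm) h1
  have hset : SplitSetup (fun x y => G.Adj x y ∧ c s(x, y) = true)
      (fun x y => G.Adj x y ∧ c s(x, y) = false) (monoRep G c true) (monoRep G c false)
      X Y m d := by
    refine ⟨fun x y h => monoRep_of_adj h.1 h.2, fun x y h => monoRep_of_adj h.1 h.2,
      fun x y h => ⟨h.1.symm, by rw [Sym2.eq_swap]; exact h.2⟩,
      fun x y h => ⟨h.1.symm, by rw [Sym2.eq_swap]; exact h.2⟩, hm.symm, hcY, ?_, ?_, h5⟩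
    · intro x hx
      exact few_nonnbrs G c X Y m d hcY x (hNX x hx) (hdeg' x)
    · intro x hx
      exact few_nonnbrs G c Y X m d hm.symm x (hNY x hx) (hdeg' x)
  have hXYd : Disjoint X Y := by
    rw [Finset.disjoint_left]
    intro v h1 h2
    rw [hmX] at h1
    rw [hmY, h1] at h2
    exact absurd h2 (by decide)
  rcases hset.main with hgood | ⟨i, j, k, l, hik, hjl, hXs, hYs⟩
  · obtain ⟨MR, MB, h1, h2, h3, h4⟩ := good_to_matching G c X Y hXYd
      (fun v => by rw [hmX, hmY]; exact f01 v) m d hm.symm hcY hgood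
    refine ⟨MR, MB, h1, h2, h3, ?_⟩
    rw [hcR]
    have h5 : ((Set.univ \ (matchSupport MR ∪ matchSupport MB)).ncard : ℝ) ≤ 8 * d := by
      exact_mod_cast h4
    linarith
  · exfalso
    apply hnsplit
    have blue : ∀ u v, G.Adj u v → monoRep G c true u ≠ monoRep G c true v →
        c s(u, v) = false := by
      intro u v huv hne
      by_contra hc
      exact hne (monoRep_of_adj huv (by simpa using hc))
    have red : ∀ u v, G.Adj u v → monoRep G c false u ≠ monoRep G c false v →
        c s(u, v) = true := by
      intro u v huv hne
      by_contra hc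
      exact hne (monoRep_of_adj huv (by simpa using hc))
    refine ⟨{v | v ∈ X ∧ monoRep G c true v = i ∧ monoRep G c false v = j},
      {v | v ∈ X ∧ monoRep G c true v = k ∧ monoRep G c false v = l},
      {v | v ∈ Y ∧ monoRep G c true v = k ∧ monoRep G c false v = j},
      {v | v ∈ Y ∧ monoRep G c true v = i ∧ monoRep G c false v = l}, ?_, ?_, ?_, ?_, ?_, ?_⟩
    · ext v
      have := hXs v
      have := hmX v
      simp only [Set.mem_union, Set.mem_ofPred_eq]
      tauto
    · rw [Set.disjoint_left]
      rintro v ⟨_, h1, _⟩ ⟨_, h2, _⟩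
      exact hik (h1.symm.trans h2)
    · ext v
      have := hYs v
      have := hmY v
      simp only [Set.mem_union, Set.mem_ofPred_eq]
      tauto
    · rw [Set.disjoint_left]
      rintro v ⟨_, h1, _⟩ ⟨_, h2, _⟩
      exact hik (h2.symm.trans h1)
    · intro u v huv hh
      apply blue u v huv
      simp only [Set.mem_ofPred_eq] at hh
      grind
    · intro u v huv hh
      apply red u v huv
      simp only [Set.mem_ofPred_eq] at hh
      grind
end

section
/- Let δ > 0 and let G be a complete multipartite graph on n vertices which has at least three partition classes each of size greater than 2√δ·n. Then no red/blue colouring of the edges of G is δ-close to a split colouring. -/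
open SimpleGraph Set

lemma aux_prod_le {V : Type*} [Fintype V] {k : ℕ} (f : V → Fin k)
    (G : SimpleGraph V) (hG : ∀ x y, G.Adj x y ↔ f x ≠ f y) (F : Set (Sym2 V)) (S : Set V)
    (hS : ∀ u ∈ S, ∀ v ∈ S, ¬ (G.deleteEdges F).Adj u v) (a b : Fin k) (hab : a ≠ b) :
    ({v | f v = a} ∩ S).ncard * ({v | f v = b} ∩ S).ncard ≤ F.ncard := by
  rw [← Set.ncard_prod]
  refine Set.ncard_le_ncard_of_injOn (fun p => s(p.1, p.2)) ?_ ?_ (Set.toFinite F)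
  · rintro ⟨x, y⟩ ⟨⟨hx, hxS⟩, ⟨hy, hyS⟩⟩
    simp only [Set.mem_setOf_eq] at hx hy
    by_contra hF
    apply hS x hxS y hyS
    rw [SimpleGraph.deleteEdges_adj]
    refine ⟨(hG x y).2 ?_, hF⟩
    rw [hx, hy]
    exact hab
  · rintro ⟨x, y⟩ ⟨⟨hx, hxS⟩, ⟨hy, hyS⟩⟩ ⟨x', y'⟩ ⟨⟨hx', hxS'⟩, ⟨hy', hyS'⟩⟩ h
    simp only [Set.mem_setOf_eq] at hx hy hx' hy'
    simp only [Sym2.eq_iff] at h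
    rcases h with ⟨h1, h2⟩ | ⟨h1, h2⟩
    · simp [h1, h2]
    · exact absurd (hx.symm.trans ((congrArg f h1).trans hy')) hab

/-- No red/blue colouring of a complete multipartite graph on `n` vertices having at least
three partition classes each of size greater than `2√δ·n` is `δ`-close to a split
colouring. -/
theorem stmt13 {V : Type*} [Fintype V] (δ : ℝ) (hδ : 0 < δ)
    (k : ℕ) (f : V → Fin k) (hf : Function.Surjective f)
    (G : SimpleGraph V) (hG : ∀ x y, G.Adj x y ↔ f x ≠ f y)
    (i j l : Fin k) (hij : i ≠ j) (hil : i ≠ l) (hjl : j ≠ l)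
    (hbig : ∀ m ∈ ({i, j, l} : Set (Fin k)),
      2 * Real.sqrt δ * (Fintype.card V : ℝ) < (({v | f v = m} : Set V).ncard : ℝ))
    (c : Sym2 V → Bool) :
    ¬ CloseToSplit G c δ := by
  classical
  rintro ⟨F, hFE, hFc, U, W, hUW, hdisj, hbip, -⟩
  have hU : ∀ u ∈ U, ∀ v ∈ U, ¬ (G.deleteEdges F).Adj u v := by
    intro u hu v hv h
    rcases hbip u v h with h | h
    · exact Set.disjoint_left.1 hdisj hv h.2
    · exact Set.disjoint_left.1 hdisj hu h.1
  have hW : ∀ u ∈ W, ∀ v ∈ W, ¬ (G.deleteEdges F).Adj u v := by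
    intro u hu v hv h
    rcases hbip u v h with h | h
    · exact Set.disjoint_left.1 hdisj h.1 hu
    · exact Set.disjoint_left.1 hdisj h.2 hv
  have hE : (G.edgeSet.ncard : ℝ) ≤ (Fintype.card V : ℝ) ^ 2 := by
    have h1 : G.edgeSet.ncard ≤ Fintype.card V ^ 2 := by
      rw [← SimpleGraph.coe_edgeFinset, Set.ncard_coe_finset]
      exact SimpleGraph.card_edgeFinset_le_card_choose_two.trans (Nat.choose_le_pow _ _)
    exact_mod_cast h1
  set t : ℝ := Real.sqrt δ * (Fintype.card V : ℝ) with ht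
  have ht0 : 0 ≤ t := by positivity
  have hFt : (F.ncard : ℝ) ≤ t * t := by
    have h2 : t * t = δ * (Fintype.card V : ℝ) ^ 2 := by
      rw [ht]
      nlinarith [Real.mul_self_sqrt hδ.le]
    rw [h2]
    exact hFc.trans (mul_le_mul_of_nonneg_left hE hδ.le)
  have key : ∀ S : Set V, (∀ u ∈ S, ∀ v ∈ S, ¬ (G.deleteEdges F).Adj u v) →
      ∀ a b : Fin k, a ≠ b → t < (({v | f v = a} ∩ S).ncard : ℝ) →
      t < (({v | f v = b} ∩ S).ncard : ℝ) → False := by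
    intro S hS a b hab ha hb
    have h1 := aux_prod_le f G hG F S hS a b hab
    have h2 : (({v | f v = a} ∩ S).ncard : ℝ) * (({v | f v = b} ∩ S).ncard : ℝ) ≤ F.ncard := by
      exact_mod_cast h1
    nlinarith
  have half : ∀ m ∈ ({i, j, l} : Set (Fin k)),
      t < (({v | f v = m} ∩ U).ncard : ℝ) ∨ t < (({v | f v = m} ∩ W).ncard : ℝ) := by
    intro m hm
    have h1 := hbig m hm
    have h2 : ({v | f v = m} : Set V).ncard ≤
        ({v | f v = m} ∩ U).ncard + ({v | f v = m} ∩ W).ncard := by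
      have h3 : ({v | f v = m} : Set V) = ({v | f v = m} ∩ U) ∪ ({v | f v = m} ∩ W) := by
        rw [← Set.inter_union_distrib_left, hUW, Set.inter_univ]
      conv_lhs => rw [h3]
      exact Set.ncard_union_le _ _
    have h4 : (({v | f v = m} : Set V).ncard : ℝ) ≤
        (({v | f v = m} ∩ U).ncard : ℝ) + (({v | f v = m} ∩ W).ncard : ℝ) := by
      exact_mod_cast h2
    by_contra! hcon
    rw [mul_assoc, ← ht] at h1
    linarith [hcon.1, hcon.2]
  rcases half i (by simp) with hi | hi <;> rcases half j (by simp) with hj | hj <;>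
    rcases half l (by simp) with hl | hl
  · exact key U hU i j hij hi hj
  · exact key U hU i j hij hi hj
  · exact key U hU i l hil hi hl
  · exact key W hW j l hjl hj hl
  · exact key U hU j l hjl hj hl
  · exact key W hW i l hil hi hl
  · exact key W hW i j hij hi hj
  · exact key W hW i j hij hi hj
end

section
/- Let the edges of a finite complete graph be coloured red and blue. Then the vertex set can be partitioned into the vertex set of a red path and the vertex set of a blue path; that is, there exist a vertex-disjoint red path and blue path whose vertex sets together cover all vertices. -/
open SimpleGraph Set

lemma exists_walk_of_chain {V : Type*} (c : Sym2 V → Bool) (b : Bool) :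
    ∀ (l : List V) (x : V), (x :: l).Nodup →
      (x :: l).IsChain (fun a a' => c s(a, a') = b) →
      ∃ (v : V) (p : (⊤ : SimpleGraph V).Walk x v), p.support = x :: l ∧
        ∀ e ∈ p.edges, c e = b := by
  intro l
  induction l with
  | nil => intro x _ _; exact ⟨x, Walk.nil, by simp, by simp⟩
  | cons y l ih =>
    intro x hn hc
    rw [List.isChain_cons_cons] at hc
    obtain ⟨v, p, hp, he⟩ := ih y (List.nodup_cons.1 hn).2 hc.2
    have hxy : x ≠ y := by
      intro h
      simp [h] at hn
    refine ⟨v, Walk.cons (by simpa using hxy) p, by simp [hp], ?_⟩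
    intro e h
    rw [Walk.edges_cons, List.mem_cons] at h
    rcases h with rfl | h
    · exact hc.1
    · exact he e h

lemma isMonoPathSet_of_chain {V : Type*} (c : Sym2 V → Bool) (b : Bool) (l : List V)
    (hn : l.Nodup) (hc : l.IsChain (fun a a' => c s(a, a') = b)) :
    IsMonoPathSet (⊤ : SimpleGraph V) c b {x | x ∈ l} := by
  cases l with
  | nil => left; simp
  | cons x l =>
    right
    obtain ⟨v, p, hp, he⟩ := exists_walk_of_chain c b l x hn hc
    exact ⟨x, v, p, by rw [Walk.isPath_def, hp]; exact hn, he, by rw [hp]⟩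

lemma exists_chains {V : Type*} (c : Sym2 V → Bool) (s : Finset V) :
    ∃ r t : List V, r.IsChain (fun a a' => c s(a, a') = true) ∧
      t.IsChain (fun a a' => c s(a, a') = false) ∧ (r ++ t).Nodup ∧
      ∀ x, x ∈ r ++ t ↔ x ∈ s := by
  classical
  induction s using Finset.induction_on with
  | empty => exact ⟨[], [], by simp, by simp, by simp, by simp⟩
  | insert v s hv ih =>
    obtain ⟨r, t, hr, ht, hn, hm⟩ := ih
    have hv' : v ∉ r ++ t := fun h => hv ((hm v).1 h)
    -- any rearrangement of `v :: (r ++ t)` covers exactly `insert v s`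
    have key : ∀ r' t' : List V, (r' ++ t').Perm (v :: (r ++ t)) →
        (r' ++ t').Nodup ∧ ∀ x, x ∈ r' ++ t' ↔ x ∈ insert v s := by
      intro r' t' h
      refine ⟨h.nodup_iff.2 (List.nodup_cons.2 ⟨hv', hn⟩), fun x => ?_⟩
      rw [h.mem_iff, List.mem_cons, hm, Finset.mem_insert]
    rcases r with _ | ⟨x, r⟩
    · exact ⟨[v], t, by simp, ht, key _ _ (by simp)⟩
    rcases t with _ | ⟨y, t⟩
    · exact ⟨x :: r, [v], hr, by simp, key _ _ (by
        rw [List.append_nil]; exact List.perm_append_singleton v (x :: r))⟩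
    by_cases h1 : c s(v, x) = true
    · exact ⟨v :: x :: r, y :: t, List.isChain_cons_cons.2 ⟨h1, hr⟩, ht, key _ _ (by simp)⟩
    by_cases h2 : c s(v, y) = false
    · exact ⟨x :: r, v :: y :: t, hr, List.isChain_cons_cons.2 ⟨h2, ht⟩,
        key _ _ List.perm_middle⟩
    rw [Bool.not_eq_true] at h1
    rw [Bool.not_eq_false] at h2
    by_cases h3 : c s(y, x) = true
    · refine ⟨v :: y :: x :: r, t, List.isChain_cons_cons.2 ⟨h2,
        List.isChain_cons_cons.2 ⟨h3, hr⟩⟩, ht.tail, key _ _ ?_⟩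
      exact (List.perm_middle (a := y) (l₁ := x :: r) (l₂ := t)).symm.cons v
    · rw [Bool.not_eq_true, Sym2.eq_swap] at h3
      refine ⟨r, v :: x :: y :: t, hr.tail, List.isChain_cons_cons.2 ⟨h1,
        List.isChain_cons_cons.2 ⟨h3, ht⟩⟩, key _ _ ?_⟩
      exact List.perm_middle.trans (List.perm_middle.cons v)

/-- Gerencsér–Gyárfás: the vertex set of any finite complete graph with red/blue-coloured
edges can be partitioned into the vertex set of a red path and the vertex set of a blue
path. -/
theorem stmt15 {V : Type*} [Fintype V] (c : Sym2 V → Bool) :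
    ∃ S T : Set V, IsMonoPathSet (⊤ : SimpleGraph V) c true S ∧
      IsMonoPathSet (⊤ : SimpleGraph V) c false T ∧
      Disjoint S T ∧ S ∪ T = Set.univ := by
  obtain ⟨r, t, hr, ht, hn, hm⟩ := exists_chains c Finset.univ
  rw [List.nodup_append] at hn
  refine ⟨{x | x ∈ r}, {x | x ∈ t}, isMonoPathSet_of_chain c _ r hn.1 hr,
    isMonoPathSet_of_chain c _ t hn.2.1 ht, ?_, ?_⟩
  · rw [Set.disjoint_left]
    intro x hx hx'
    exact hn.2.2 x hx x hx' rfl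
  · ext x
    have := hm x
    simpa using this
end
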